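/- Let G=(V,E) be a multigraph without self-loops and let s ∈ V. Then the maximum size of a basic s-cycle packing of G equals the minimum size of an s-cycle cover of G; moreover, there exist a basic s-cycle packing f and a half-integral s-cycle cover x (values in {0,1/2,1}) such that (1/2)·Σ_{e incident to s} f(e) = Σ_{v∈V} x(v). -/

import Mathlib

/-- A multigraph on vertex type `V` with edge type `E`: each edge has an
unordered pair of endpoints.  Parallel edges are distinguished (they are
different elements of `E`), and self-loops are edges whose endpoint pair is
diagonal. -/
structure Multigraph (V : Type) (E : Type) where
  ends : E → Sym2 V

namespace Multigraph

variable {V E : Type}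

/-- A multigraph has no self-loops. -/
def LoopFree (G : Multigraph V E) : Prop := ∀ e : E, ¬ (G.ends e).IsDiag

/-- The degree of a vertex: the number of incident edges (parallel edges
counted with multiplicity). -/
noncomputable def degree (G : Multigraph V E) (v : V) : ℕ :=
  Nat.card {e : E // v ∈ G.ends e}

/-- A walk `(v₀, e₁, v₁, …, e_l, v_l)` of positive length `l ≥ 1` in which
each edge `eᵢ` joins `v_{i-1}` and `vᵢ`. -/
structure Walk (G : Multigraph V E) where
  len : ℕ
  len_pos : 0 < len
  verts : Fin (len + 1) → V
  edges : Fin len → E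
  valid : ∀ i : Fin len, G.ends (edges i) = s(verts i.castSucc, verts i.succ)

namespace Walk

variable {G : Multigraph V E}

/-- The first vertex of a walk. -/
def start (W : G.Walk) : V := W.verts 0

/-- The last vertex of a walk. -/
def finish (W : G.Walk) : V := W.verts (Fin.last W.len)

/-- A cycle: a closed walk of positive length with pairwise distinct edges and
pairwise distinct vertices (except that the first and last vertex coincide). -/
def IsCycle (W : G.Walk) : Prop :=
  W.start = W.finish ∧ Function.Injective W.edges ∧
    Function.Injective fun i : Fin W.len => W.verts i.castSucc

/-- An `s`-cycle: a walk with `v₀ = v_l = s`, with `vᵢ ≠ s` for `0 < i < l`,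
with no U-turns (`eᵢ ≠ e_{i+1}`), and in which every edge occurs at most
twice. -/
def IsSCycle (W : G.Walk) (s : V) : Prop :=
  W.start = s ∧ W.finish = s ∧
  (∀ i : Fin (W.len + 1), i ≠ 0 → i ≠ Fin.last W.len → W.verts i ≠ s) ∧
  (∀ i j : Fin W.len, (i : ℕ) + 1 = (j : ℕ) → W.edges i ≠ W.edges j) ∧
  (∀ e : E, Nat.card {i : Fin W.len // W.edges i = e} ≤ 2)

/-- The multiplicity of a vertex `v` in the multiset `V(W)` of vertices of a
walk `W`. -/
noncomputable def vertCount (W : G.Walk) (v : V) : ℕ :=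
  Nat.card {i : Fin (W.len + 1) // W.verts i = v}

end Walk

/-- `S` is a feedback vertex set: every cycle of `G` meets `S`
(equivalently, `G − S` contains no cycle). -/
def IsFVS (G : Multigraph V E) (S : Set V) : Prop :=
  ∀ W : G.Walk, W.IsCycle → ∃ i, W.verts i ∈ S

/-- The minimum size of a feedback vertex set. -/
noncomputable def fvs [Fintype V] (G : Multigraph V E) : ℕ :=
  sInf {n : ℕ | ∃ S : Set V, G.IsFVS S ∧ S.ncard = n}

/-- `x : V → ℝ≥0` is an `s`-cycle cover: `x s = 0` and every `s`-cycle `C`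
satisfies `x(V(C)) ≥ 1` (vertices counted with multiplicity). -/
def IsSCycleCover (G : Multigraph V E) (s : V) (x : V → ℝ) : Prop :=
  (∀ v, 0 ≤ x v) ∧ x s = 0 ∧
    ∀ W : G.Walk, W.IsSCycle s → 1 ≤ ∑ i, x (W.verts i)

/-- A function is half-integral if it takes values in `{0, 1/2, 1}`. -/
def HalfIntegral (x : V → ℝ) : Prop := ∀ v, x v = 0 ∨ x v = 1/2 ∨ x v = 1

/-- A minimum `s`-cycle cover. -/
def IsMinSCycleCover [Fintype V] (G : Multigraph V E) (s : V) (x : V → ℝ) : Prop :=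
  G.IsSCycleCover s x ∧ ∀ x' : V → ℝ, G.IsSCycleCover s x' → ∑ v, x v ≤ ∑ v, x' v

/-- An `s`-cycle packing: a nonnegative, finitely supported weighting of the
`s`-cycles such that every vertex `v ≠ s` is used (with multiplicity) with
total weight at most `1`. -/
def IsSCyclePacking (G : Multigraph V E) (s : V) (y : G.Walk →₀ ℝ) : Prop :=
  (∀ W, 0 ≤ y W) ∧ (∀ W, y W ≠ 0 → W.IsSCycle s) ∧
    ∀ v : V, v ≠ s → ∑ W ∈ y.support, (W.vertCount v : ℝ) * y W ≤ 1

/-- The size of an `s`-cycle packing. -/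
noncomputable def packingSize {G : Multigraph V E} (y : G.Walk →₀ ℝ) : ℝ :=
  ∑ W ∈ y.support, y W

/-- Number of edges incident to `v` with `f`-value 1. -/
noncomputable def cnt1 (G : Multigraph V E) (f : E → ℝ) (v : V) : ℕ :=
  Nat.card {e : E // v ∈ G.ends e ∧ f e = 1}

/-- Number of edges incident to `v` with `f`-value 1/2. -/
noncomputable def cntH (G : Multigraph V E) (f : E → ℝ) (v : V) : ℕ :=
  Nat.card {e : E // v ∈ G.ends e ∧ f e = 1/2}

/-- type-O: all incident edges have `f`-value 0. -/
def IsTypeO (G : Multigraph V E) (f : E → ℝ) (v : V) : Prop :=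
  ∀ e : E, v ∈ G.ends e → f e = 0

/-- type-I: exactly two incident edges have value 1 and none has value 1/2. -/
def IsTypeI (G : Multigraph V E) (f : E → ℝ) (v : V) : Prop :=
  G.cnt1 f v = 2 ∧ G.cntH f v = 0

/-- type-H: no incident edge has value 1 and exactly two have value 1/2. -/
def IsTypeH (G : Multigraph V E) (f : E → ℝ) (v : V) : Prop :=
  G.cnt1 f v = 0 ∧ G.cntH f v = 2

/-- type-T: exactly one incident edge has value 1 and exactly two have value 1/2. -/
def IsTypeT (G : Multigraph V E) (f : E → ℝ) (v : V) : Prop :=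
  G.cnt1 f v = 1 ∧ G.cntH f v = 2

/-- A basic `s`-cycle packing: `f : E → {0,1/2,1}` with `f(e) ∈ {0,1}` on edges
incident to `s`, every vertex `v ≠ s` of one of the four types O, I, H, T, and
every cycle consisting of edges of value 1/2 (i.e. every half-integral cycle)
containing an odd number of type-T vertices. -/
def IsBasicSCyclePacking (G : Multigraph V E) (s : V) (f : E → ℝ) : Prop :=
  (∀ e : E, f e = 0 ∨ f e = 1/2 ∨ f e = 1) ∧
  (∀ e : E, s ∈ G.ends e → f e = 0 ∨ f e = 1) ∧
  (∀ v : V, v ≠ s →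
    G.IsTypeO f v ∨ G.IsTypeI f v ∨ G.IsTypeH f v ∨ G.IsTypeT f v) ∧
  (∀ W : G.Walk, W.IsCycle → (∀ j, f (W.edges j) = 1/2) →
    Odd (Nat.card {i : Fin W.len // G.IsTypeT f (W.verts i.castSucc)}))

/-- The size of a basic `s`-cycle packing: `(1/2) · Σ_{e ∈ δ(s)} f(e)`. -/
noncomputable def basicSize [Fintype E] (G : Multigraph V E) (s : V) (f : E → ℝ) : ℝ :=
  (1/2) * ∑ e : E, Set.indicator {e' : E | s ∈ G.ends e'} f e

/-- `u` and `v` are connected by a walk avoiding the vertex set `S` and the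
edge set `F` (or `u = v`). -/
def Reach (G : Multigraph V E) (S : Set V) (F : Set E) (u v : V) : Prop :=
  u = v ∨ ∃ W : G.Walk, (∀ i, W.verts i ∉ S) ∧ (∀ j, W.edges j ∉ F) ∧
    W.start = u ∧ W.finish = v

/-- The edge `e` belongs to the set `B` of the `s`-cycle cover reduction with
respect to the set `X`: `e` joins `s` to some `u ∉ X`, `e` is a bridge of
`G − X` (its endpoints are disconnected in `G − X − e`), and the connected
component of `u` in `G − X − s` is a tree (no cycle of `G − X − s` passes
through a vertex reachable from `u` in `G − X − s`). -/
def InB (G : Multigraph V E) (s : V) (X : Set V) (e : E) : Prop :=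
  ∃ u : V, G.ends e = s(s, u) ∧ u ≠ s ∧ u ∉ X ∧ s ∉ X ∧
    ¬ G.Reach X {e} s u ∧
    ¬ ∃ W : G.Walk, W.IsCycle ∧ (∀ i, W.verts i ∉ X ∪ {s}) ∧
        G.Reach (X ∪ {s}) ∅ u W.start

/-- The graph `G' = (V, E')` obtained from `G` by the `s`-cycle cover
reduction with respect to a half-integral `s`-cycle cover `x`: with
`X = x⁻¹(1)`, insert a double edge (two new parallel edges) between `s` and
each `v ∈ X`, and delete the edges of `B`. -/
def reduced (G : Multigraph V E) (s : V) (x : V → ℝ) :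
    Multigraph V ({e : E // ¬ G.InB s {v : V | x v = 1} e} ⊕ ({v : V // x v = 1} × Bool)) where
  ends := fun e =>
    match e with
    | .inl e' => G.ends e'.val
    | .inr p => s(s, p.1.val)

/-- The graph `G − s` obtained by deleting the vertex `s` and all incident
edges (the vertex `s` is kept as an isolated vertex). -/
def deleteVertex (G : Multigraph V E) (s : V) :
    Multigraph V {e : E // s ∉ G.ends e} where
  ends := fun e => G.ends e.val

/-- An `f`-augmenting walk for a basic `s`-cycle packing `f`:
(1) it starts at `s`; (2) its first edge has value 0; (3) its edges are
pairwise distinct; (4) its vertices `v₀,…,v_{l-1}` are pairwise distinct;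
(5) each interior vertex `vᵢ` (`1 ≤ i ≤ l-1`) is type-O, or type-I with
`f(e) = 1` for at least one of `e ∈ {eᵢ, e_{i+1}}`; (6) if the last vertex
`v_l` equals `vᵢ` for some `i < l` then: `v_l = s` and `f(e_l) = 0`, or `v_l`
is type-O, or `v_l` is type-I and `f(e) = 1` for at least one of
`e ∈ {eᵢ, e_l}`; (7) if `v_l` is a new vertex then it is type-H or type-T. -/
def IsAugmentingWalk (G : Multigraph V E) (s : V) (f : E → ℝ) (W : G.Walk) : Prop :=
  W.start = s ∧
  f (W.edges ⟨0, W.len_pos⟩) = 0 ∧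
  Function.Injective W.edges ∧
  Function.Injective (fun i : Fin W.len => W.verts i.castSucc) ∧
  (∀ i : Fin W.len, 0 < i.val →
    (G.IsTypeO f (W.verts i.castSucc) ∨
      (G.IsTypeI f (W.verts i.castSucc) ∧
        (f (W.edges ⟨i.val - 1, Nat.lt_of_le_of_lt (Nat.sub_le _ _) i.isLt⟩) = 1 ∨
          f (W.edges i) = 1)))) ∧
  (∀ i : Fin W.len, W.finish = W.verts i.castSucc →
    ((W.finish = s ∧ f (W.edges ⟨W.len - 1, Nat.sub_lt W.len_pos Nat.one_pos⟩) = 0) ∨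
     (W.finish ≠ s ∧ G.IsTypeO f W.finish) ∨
     (W.finish ≠ s ∧ G.IsTypeI f W.finish ∧
       (f (W.edges ⟨i.val - 1, Nat.lt_of_le_of_lt (Nat.sub_le _ _) i.isLt⟩) = 1 ∨
         f (W.edges ⟨W.len - 1, Nat.sub_lt W.len_pos Nat.one_pos⟩) = 1)))) ∧
  ((∀ i : Fin W.len, W.finish ≠ W.verts i.castSucc) →
    (G.IsTypeH f W.finish ∨ G.IsTypeT f W.finish))

/-- `g = f_W` is obtained from `f` by augmenting along the walk `W`.
If `v_l = s` (so `h = l`), the values of `f` on `e₁,…,e_l` are flipped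
(`f ↦ 1 − f`).  If `v_l ≠ s` equals an earlier vertex `vᵢ` (so `h = i`), the
values on `e₁,…,e_h` are flipped and the values on `e_{h+1},…,e_l` are set to
`1/2`.  If `v_l ≠ s` is a new vertex (type-H or type-T, with `h = l`), the
values on `e₁,…,e_l` are flipped and, on the half-integral cycle `C` of `v_l`
(traversed from `t₀ = v_l` in either direction), the edges of the segment
`Pᵢ` between consecutive markers `tᵢ, t_{i+1}` (the markers being `v_l`
together with the type-T vertices of `C`) receive value `0` for even `i` and
`1` for odd `i`; the segment index of an edge is the number of type-T
vertices strictly preceding it along the traversal.  All other edges keep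
their `f`-value. -/
def AugmentedAlong (G : Multigraph V E) (s : V) (f : E → ℝ) (W : G.Walk) (g : E → ℝ) : Prop :=
  -- Case A : the walk returns to `s`.
  (W.finish = s ∧
    (∀ j : Fin W.len, g (W.edges j) = 1 - f (W.edges j)) ∧
    (∀ e : E, (∀ j, e ≠ W.edges j) → g e = f e)) ∨
  -- Case B : the last vertex is a repeated vertex `vᵢ ≠ s` (type-O or type-I).
  (W.finish ≠ s ∧
    (∃ i : Fin W.len, W.finish = W.verts i.castSucc ∧
      (∀ j : Fin W.len, j.val < i.val → g (W.edges j) = 1 - f (W.edges j)) ∧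
      (∀ j : Fin W.len, i.val ≤ j.val → g (W.edges j) = 1/2) ∧
      (∀ e : E, (∀ j, e ≠ W.edges j) → g e = f e))) ∨
  -- Case C : the last vertex is a new vertex of type-H or type-T.
  (W.finish ≠ s ∧ (∀ i : Fin W.len, W.finish ≠ W.verts i.castSucc) ∧
    (∃ C : G.Walk, C.IsCycle ∧ C.verts 0 = W.finish ∧
      (∀ j, f (C.edges j) = 1/2) ∧
      (∀ j : Fin W.len, g (W.edges j) = 1 - f (W.edges j)) ∧
      (∀ j : Fin C.len,
        g (C.edges j) =
          if Even (Nat.card {m : Fin C.len //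
              1 ≤ m.val ∧ m.val ≤ j.val ∧ G.IsTypeT f (C.verts m.castSucc)})
          then 0 else 1) ∧
      (∀ e : E, (∀ j, e ≠ W.edges j) → (∀ j, e ≠ C.edges j) → g e = f e)))


end Multigraph

/-!
Drop the parity condition from basic packings and choose, among the packings of maximum size, one
with the fewest halves. The parity condition then holds by itself: round the edges of a
half-integral cycle to `0` and `1` so that all its vertices but the first become of type O or I. By
the choice of the packing this fails at the first vertex, which ends up with a single edge of value
`1`. As each rounded edge has two ends on the cycle, the number of type-T vertices is odd.

Weak duality: the least weights `p e v` of walks from `s` that arrive at `v` through `e`, truncated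
at `1`, form a potential. Summing the inequalities satisfied by the potential against a packing
shows that every cover is at least as large as every packing.

Strong duality is an induction which contracts into `s` the end `u` of a spoke that can be raised
from `0` to `1`. If `u` carries halves, they are first rounded along the path which they form once
the half-integral cycle of `u` is cut open. If `u` carries two edges of value `1`, these become
spokes of the contraction, and an augmenting walk may only undo them; the reference set `X` collects
such edges, and its members of value `1` count negatively in the size. The induction ends without a
spoke to contract, where half the number of spokes of value `1` at each vertex is a cover of the
right size, or else yields a packing with one more spoke or a cycle through two spokes of value `0`,
both of which contradict maximality.
-/

namespace Multigraph

open Finset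

section LocalValues

variable {E : Type*} {S : Finset E} {F F' : E → ℕ} {e a b : E} {k m : ℕ}

/-- The number of edges of `S` at level `k`. Packings are handled through their doubled values
`F = 2 f`, so that level `2` is the value `1` and level `1` is the value `1/2`. -/
def levelCard (F : E → ℕ) (k : ℕ) (S : Finset E) : ℕ := #{e ∈ S | F e = k}

lemma levelCard_congr (h : ∀ e ∈ S, F' e = F e) : levelCard F' k S = levelCard F k S :=
  congrArg card <| filter_congr fun e he ↦ by rw [h e he]

lemma levelCard_eq_zero : levelCard F k S = 0 ↔ ∀ e ∈ S, F e ≠ k := by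
  rw [levelCard, card_eq_zero, filter_eq_empty_iff]

lemma levelCard_lt_levelCard (h : ∀ e ∈ S, F e = k → F' e = k) (ha : a ∈ S) (hF : F a ≠ k)
    (hF' : F' a = k) : levelCard F k S < levelCard F' k S := by
  refine card_lt_card <| (ssubset_iff_of_subset fun e he ↦ ?_).2
    ⟨a, mem_filter.2 ⟨ha, hF'⟩, fun h' ↦ hF (mem_filter.1 h').2⟩
  obtain ⟨heS, he⟩ := mem_filter.1 he
  exact mem_filter.2 ⟨heS, h e heS he⟩

lemma exists_forall_iff_eq_of_levelCard_eq_two (h : levelCard F k S = 2) (ha : a ∈ S)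
    (hFa : F a = k) : ∃ p, ∀ d, d ≠ a ∧ d ∈ S ∧ F d = k ↔ d = p := by
  classical
  have hcard : #({d ∈ S | F d = k}.erase a) = 1 := by
    rw [card_erase_of_mem (mem_filter.2 ⟨ha, hFa⟩)]
    exact congrArg (· - 1) h
  obtain ⟨p, hp⟩ := card_eq_one.1 hcard
  exact ⟨p, fun d ↦ by simpa using Finset.ext_iff.1 hp d⟩

lemma sum_eq_levelCard (hF : ∀ e ∈ S, F e ≤ 2) :
    ∑ e ∈ S, F e = 2 * levelCard F 2 S + levelCard F 1 S := by
  simp_rw [levelCard, card_filter, mul_sum, ← sum_add_distrib]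
  refine sum_congr rfl fun e he ↦ ?_
  have := hF e he
  split_ifs <;> omega

/-- The edges of `S`, seen as the edges around a vertex, make it of type O, I, H or T. -/
def IsLocallyBasic (F : E → ℕ) (S : Finset E) : Prop :=
  (levelCard F 2 S = 0 ∧ levelCard F 1 S = 0) ∨ (levelCard F 2 S = 2 ∧ levelCard F 1 S = 0) ∨
    (levelCard F 2 S = 0 ∧ levelCard F 1 S = 2) ∨ (levelCard F 2 S = 1 ∧ levelCard F 1 S = 2)

lemma isLocallyBasic_congr (h : ∀ e ∈ S, F' e = F e) :
    IsLocallyBasic F' S ↔ IsLocallyBasic F S := by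
  simp only [IsLocallyBasic, levelCard_congr h]

lemma IsLocallyBasic.sum_le_four (h : IsLocallyBasic F S) (hF : ∀ e ∈ S, F e ≤ 2) :
    ∑ e ∈ S, F e ≤ 4 := by
  rw [sum_eq_levelCard hF]
  unfold IsLocallyBasic at h
  omega

/-- An augmenting walk may pass through the vertex with edges `S`, using `a` and `b`: the vertex is
of type O, or of type I with `a` or `b` of value `1`. -/
structure CanPass (F : E → ℕ) (S : Finset E) (a b : E) : Prop where
  ne : a ≠ b
  left_mem : a ∈ S
  right_mem : b ∈ S
  no_half : levelCard F 1 S = 0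
  turn : levelCard F 2 S = 0 ∨ F a = 2 ∨ F b = 2

lemma CanPass.congr (h : CanPass F S a b) (hF : ∀ e ∈ S, F' e = F e) : CanPass F' S a b where
  ne := h.ne
  left_mem := h.left_mem
  right_mem := h.right_mem
  no_half := (levelCard_congr hF).trans h.no_half
  turn := by rw [levelCard_congr hF, hF a h.left_mem, hF b h.right_mem]; exact h.turn

lemma CanPass.symm (h : CanPass F S a b) : CanPass F S b a :=
  ⟨h.ne.symm, h.right_mem, h.left_mem, h.no_half, h.turn.imp_right Or.symm⟩

lemma CanPass.left_eq_zero_or_two (h : CanPass F S a b) (hF : ∀ e ∈ S, F e ≤ 2) :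
    F a = 0 ∨ F a = 2 := by
  have := hF a h.left_mem
  have := levelCard_eq_zero.1 h.no_half a h.left_mem
  omega

lemma IsLocallyBasic.sum_mul_le_sum_mul (h : IsLocallyBasic F S) (hF : ∀ e ∈ S, F e ≤ 2)
    {p q : E → ℝ} (hpq : ∀ e ∈ S, ∀ e' ∈ S, e ≠ e' → p e ≤ q e') :
    ∑ e ∈ S, (F e : ℝ) * p e ≤ ∑ e ∈ S, (F e : ℝ) * q e := by
  have hsplit (r : E → ℝ) : ∑ e ∈ S, (F e : ℝ) * r e =
      2 * ∑ e ∈ S with F e = 2, r e + ∑ e ∈ S with F e = 1, r e := by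
    rw [sum_filter, sum_filter, mul_sum, ← sum_add_distrib]
    refine sum_congr rfl fun e he ↦ ?_
    obtain h | h | h : F e = 0 ∨ F e = 1 ∨ F e = 2 := by have := hF e he; omega
    all_goals simp [h]
  have hpair {T : Finset E} (hT : T ⊆ S) (hcard : #T = 2) : ∑ e ∈ T, p e ≤ ∑ e ∈ T, q e := by
    classical
    obtain ⟨a, b, hab, rfl⟩ := card_eq_two.1 hcard
    rw [sum_pair hab, sum_pair hab]
    have ha : a ∈ S := hT (by simp)
    have hb : b ∈ S := hT (by simp)
    linarith [hpq a ha b hb hab, hpq b hb a ha hab.symm]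
  rw [hsplit, hsplit]
  obtain ⟨h2, h1⟩ | ⟨h2, h1⟩ | ⟨h2, h1⟩ | ⟨h2, h1⟩ := h
  · simp [card_eq_zero.1 h2, card_eq_zero.1 h1]
  · simpa [card_eq_zero.1 h1] using hpair (filter_subset _ _) h2
  · simpa [card_eq_zero.1 h2] using hpair (filter_subset _ _) h1
  · obtain ⟨t, ht⟩ := card_eq_one.1 h2
    have htS : t ∈ ({e ∈ S | F e = 2} : Finset E) := ht ▸ mem_singleton_self t
    have hbound {e : E} (he : e ∈ ({e ∈ S | F e = 1} : Finset E)) : p t ≤ q e ∧ p e ≤ q t := by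
      rw [mem_filter] at he htS
      have hne : t ≠ e := fun hte ↦ by simp [hte, he.2] at htS
      exact ⟨hpq t htS.1 e he.1 hne, hpq e he.1 t htS.1 hne.symm⟩
    classical
    obtain ⟨a, b, hab, hT⟩ := card_eq_two.1 h1
    have ha := hbound (hT ▸ mem_insert_self a {b})
    have hb := hbound (hT ▸ mem_insert_of_mem (mem_singleton_self b))
    rw [ht, hT, sum_singleton, sum_singleton, sum_pair hab, sum_pair hab]
    linarith

variable [DecidableEq E]

lemma levelCard_eq_ite_add_levelCard_erase (F : E → ℕ) (k : ℕ) (ha : a ∈ S) :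
    levelCard F k S = (if F a = k then 1 else 0) + levelCard F k (S.erase a) := by
  simp_rw [levelCard, card_filter]
  exact (add_sum_erase S _ ha).symm

lemma levelCard_update_of_notMem (ha : a ∉ S) :
    levelCard (Function.update F a m) k S = levelCard F k S :=
  levelCard_congr fun _ he ↦ Function.update_of_ne (ne_of_mem_of_not_mem he ha) _ _

lemma levelCard_update_add (F : E → ℕ) (m k : ℕ) (ha : a ∈ S) :
    levelCard (Function.update F a m) k S + (if F a = k then 1 else 0) =
      levelCard F k S + (if m = k then 1 else 0) := by
  rw [levelCard_eq_ite_add_levelCard_erase F k ha, levelCard_eq_ite_add_levelCard_erase _ k ha,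
    levelCard_update_of_notMem (notMem_erase a S), Function.update_self]
  omega

lemma levelCard_eq_add_of_pair (F : E → ℕ) (k : ℕ) (ha : a ∈ S) (hb : b ∈ S) (hab : a ≠ b) :
    levelCard F k S = (if F a = k then 1 else 0) + (if F b = k then 1 else 0) +
      levelCard F k (S \ {a, b}) := by
  rw [levelCard_eq_ite_add_levelCard_erase F k ha,
    levelCard_eq_ite_add_levelCard_erase F k (mem_erase.2 ⟨hab.symm, hb⟩), add_assoc,
    sdiff_insert, sdiff_singleton_eq_erase, erase_right_comm]

lemma levelCard_eq_add_of_triple (F : E → ℕ) (k : ℕ) (he : e ∈ S) (ha : a ∈ S) (hb : b ∈ S)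
    (hea : e ≠ a) (heb : e ≠ b) (hab : a ≠ b) :
    levelCard F k S = (if F e = k then 1 else 0) + (if F a = k then 1 else 0) +
      (if F b = k then 1 else 0) + levelCard F k (S \ {e, a, b}) := by
  have hrest : S.erase e \ {a, b} = S \ {e, a, b} := by grind
  rw [levelCard_eq_ite_add_levelCard_erase F k he, levelCard_eq_add_of_pair F k
    (mem_erase.2 ⟨hea.symm, ha⟩) (mem_erase.2 ⟨heb.symm, hb⟩) hab, hrest]
  omega

lemma isLocallyBasic_update_of_notMem (ha : a ∉ S) :
    IsLocallyBasic (Function.update F a m) S ↔ IsLocallyBasic F S := by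
  simp only [IsLocallyBasic, levelCard_update_of_notMem ha]

lemma update_le_two (hF : ∀ e, F e ≤ 2) (hm : m ≤ 2) (e : E) : Function.update F a m e ≤ 2 := by
  obtain rfl | he := eq_or_ne e a
  · simpa using hm
  · simpa [he] using hF e

lemma update_eq_of_ne_one (ha : F a = 1) (he : F e ≠ 1) : Function.update F a m e = F e :=
  Function.update_of_ne (by rintro rfl; exact he ha) _ _

namespace CanPass

lemma isLocallyBasic_of_eq_two_sub (h : CanPass F S a b) (hF : ∀ e ∈ S, F e ≤ 2)
    (hS : IsLocallyBasic F S) (hF' : ∀ e ∈ S \ {a, b}, F' e = F e)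
    (ha : F' a = 2 - F a) (hb : F' b = 2 - F b) : IsLocallyBasic F' S := by
  have h1 := h.no_half
  have h2 := h.turn
  unfold IsLocallyBasic at hS ⊢
  simp only [levelCard_eq_add_of_pair _ _ h.left_mem h.right_mem h.ne, levelCard_congr hF', ha, hb]
    at hS h1 h2 ⊢
  obtain ha0 | ha0 := h.left_eq_zero_or_two hF <;>
  obtain hb0 | hb0 := h.symm.left_eq_zero_or_two hF <;>
  simp [ha0, hb0] at hS h1 h2 ⊢ <;> omega

lemma isLocallyBasic_of_eq_one (h : CanPass F S a b) (hF : ∀ e ∈ S, F e ≤ 2)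
    (hS : IsLocallyBasic F S) (hF' : ∀ e ∈ S \ {a, b}, F' e = F e)
    (ha : F' a = 1) (hb : F' b = 1) : IsLocallyBasic F' S := by
  have h1 := h.no_half
  have h2 := h.turn
  unfold IsLocallyBasic at hS ⊢
  simp only [levelCard_eq_add_of_pair _ _ h.left_mem h.right_mem h.ne, levelCard_congr hF', ha, hb]
    at hS h1 h2 ⊢
  obtain ha0 | ha0 := h.left_eq_zero_or_two hF <;>
  obtain hb0 | hb0 := h.symm.left_eq_zero_or_two hF <;>
  simp [ha0, hb0] at hS h1 h2 ⊢ <;> omega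

lemma isLocallyBasic_lollipop (ha : CanPass F S e a) (hb : CanPass F S e b) (hab : a ≠ b)
    (hF : ∀ d ∈ S, F d ≤ 2) (hS : IsLocallyBasic F S) (hF' : ∀ d ∈ S \ {e, a, b}, F' d = F d)
    (he : F' e = 2 - F e) (ha' : F' a = 1) (hb' : F' b = 1) : IsLocallyBasic F' S := by
  have h1 := ha.no_half
  have h2a := ha.turn
  have h2b := hb.turn
  unfold IsLocallyBasic at hS ⊢
  simp only [levelCard_eq_add_of_triple _ _ ha.left_mem ha.right_mem hb.right_mem ha.ne hb.ne hab,
    levelCard_congr hF', he, ha', hb'] at hS h1 h2a h2b ⊢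
  obtain he0 | he0 := ha.left_eq_zero_or_two hF <;>
  obtain ha0 | ha0 := ha.symm.left_eq_zero_or_two hF <;>
  obtain hb0 | hb0 := hb.symm.left_eq_zero_or_two hF <;>
  simp [he0, ha0, hb0] at hS h1 h2a h2b ⊢ <;> omega

end CanPass

end LocalValues

section Rounding

variable {V E : Type} [DecidableEq V] [Fintype E] {G : Multigraph V E} {s u v w : V}
  {F F' : E → ℕ} {a : E}

/-- The set of edges at `v`. -/
def incident (G : Multigraph V E) (v : V) : Finset E := {e | v ∈ G.ends e}

lemma mem_incident : a ∈ G.incident v ↔ v ∈ G.ends a := by simp [incident]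

lemma left_mem_incident (ha : G.ends a = s(v, w)) : a ∈ G.incident v := by simp [mem_incident, ha]

lemma right_mem_incident (ha : G.ends a = s(v, w)) : a ∈ G.incident w := by simp [mem_incident, ha]

lemma mem_incident_iff_of_ends (ha : G.ends a = s(v, w)) : a ∈ G.incident u ↔ u = v ∨ u = w := by
  rw [mem_incident, ha, Sym2.mem_iff]

/-- A basic packing without the parity condition on half-integral cycles, in doubled values. -/
structure IsPrebasic (G : Multigraph V E) (s : V) (F : E → ℕ) : Prop where
  le_two : ∀ e, F e ≤ 2
  ne_one : ∀ e ∈ G.incident s, F e ≠ 1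
  isLocallyBasic : ∀ v ≠ s, IsLocallyBasic F (G.incident v)

/-- All loops are at `s`. Contracting an edge at `s` creates such loops. -/
def LoopsOnlyAt (G : Multigraph V E) (s : V) : Prop := ∀ e v, G.ends e = s(v, v) → v = s

lemma LoopsOnlyAt.exists_ends_eq_of_half (hG : G.LoopsOnlyAt s) (hs : ∀ e ∈ G.incident s, F e ≠ 1)
    (hav : a ∈ G.incident v) (ha : F a = 1) : ∃ w, w ≠ s ∧ w ≠ v ∧ G.ends a = s(v, w) := by
  obtain ⟨w, hw⟩ := Sym2.mem_iff_exists.1 (mem_incident.1 hav)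
  have hws : w ≠ s := fun h ↦ hs a (h ▸ right_mem_incident hw) ha
  exact ⟨w, hws, fun h ↦ hws (hG a w (h ▸ hw)), hw⟩

/-- `F'` is obtained from `F` by rounding some halves to integers so that no half is left at `u`.
The vertex `u` may end up with a single `1`. -/
structure RoundsAt (G : Multigraph V E) (s u : V) (F F' : E → ℕ) : Prop where
  le_two : ∀ e, F' e ≤ 2
  eq_of_ne_one : ∀ e, F e ≠ 1 → F' e = F e
  halves_lt : levelCard F' 1 univ < levelCard F 1 univ
  isLocallyBasic : ∀ v, v ≠ s → v ≠ u → IsLocallyBasic F' (G.incident v)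
  half_eq_zero : levelCard F' 1 (G.incident u) = 0
  full_le_two : levelCard F' 2 (G.incident u) ≤ 2

lemma RoundsAt.isPrebasic (h : G.RoundsAt s u F F') (hs : ∀ e ∈ G.incident s, F e ≠ 1)
    (hu : levelCard F' 2 (G.incident u) ≠ 1) : G.IsPrebasic s F' where
  le_two := h.le_two
  ne_one e he := by rw [h.eq_of_ne_one e (hs e he)]; exact hs e he
  isLocallyBasic v hv := by
    obtain rfl | hvu := eq_or_ne v u
    · have := h.half_eq_zero
      have := h.full_le_two
      unfold IsLocallyBasic
      omega
    · exact h.isLocallyBasic v hv hvu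

/-- The halves form disjoint cycles and one path, from `u` to `v`. -/
structure IsHalfPath (G : Multigraph V E) (s : V) (F : E → ℕ) (u v : V) : Prop where
  le_two : ∀ e, F e ≤ 2
  ne_one : ∀ e ∈ G.incident s, F e ≠ 1
  isLocallyBasic : ∀ w, w ≠ s → w ≠ u → w ≠ v → IsLocallyBasic F (G.incident w)
  half_source : levelCard F 1 (G.incident u) = 1
  full_source : levelCard F 2 (G.incident u) ≤ 1
  half_target : levelCard F 1 (G.incident v) = 1
  full_target : levelCard F 2 (G.incident v) ≤ 2

section DecidableEdges

variable [DecidableEq E]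

lemma halves_update_lt (ha : F a = 1) (hk : k ≠ 1) :
    levelCard (Function.update F a k) 1 univ < levelCard F 1 univ := by
  have := levelCard_update_add F k 1 (mem_univ a)
  simp only [ha, hk, if_true, if_false] at this
  omega

lemma RoundsAt.of_update (h : G.RoundsAt s u (Function.update F a k) F') (ha : F a = 1)
    (hk : k ≠ 1) : G.RoundsAt s u F F' where
  le_two := h.le_two
  eq_of_ne_one e he := by
    have hup := update_eq_of_ne_one (m := k) ha he
    rw [h.eq_of_ne_one e (hup ▸ he), hup]
  halves_lt := h.halves_lt.trans (halves_update_lt ha hk)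
  isLocallyBasic := h.isLocallyBasic
  half_eq_zero := h.half_eq_zero
  full_le_two := h.full_le_two

namespace IsHalfPath

lemma exists_isLocallyBasic_update (h : G.IsHalfPath s F u v) (hav : a ∈ G.incident v)
    (ha : F a = 1) :
    ∃ k, (k = 0 ∨ k = 2) ∧ IsLocallyBasic (Function.update F a k) (G.incident v) := by
  have h1 := h.half_target
  have h2 := h.full_target
  have hup (k m) := levelCard_update_add F k m hav
  simp only [ha] at hup
  unfold IsLocallyBasic
  by_cases hone : levelCard F 2 (G.incident v) = 1
  · have := hup 2 1
    have := hup 2 2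
    exact ⟨2, by simp, by simp_all⟩
  · have := hup 0 1
    have := hup 0 2
    simp only [Nat.reduceEqDiff, if_true, if_false] at *
    exact ⟨0, by simp, by omega⟩

lemma isLocallyBasic_update (h : G.IsHalfPath s F u v) (hw : G.ends a = s(v, w))
    (hv : IsLocallyBasic (Function.update F a k) (G.incident v)) {z : V} (hzs : z ≠ s)
    (hzu : z ≠ u) (hzw : z ≠ w) : IsLocallyBasic (Function.update F a k) (G.incident z) := by
  obtain rfl | hzv := eq_or_ne z v
  · exact hv
  · rw [isLocallyBasic_update_of_notMem (by simp [mem_incident_iff_of_ends hw, hzv, hzw])]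
    exact h.isLocallyBasic z hzs hzu hzv

lemma roundsAt_update (h : G.IsHalfPath s F u v) (hu : G.ends a = s(v, u)) (ha : F a = 1)
    (hk : k = 0 ∨ k = 2) (hv : IsLocallyBasic (Function.update F a k) (G.incident v)) :
    G.RoundsAt s u F (Function.update F a k) := by
  have h1 := levelCard_update_add F k 1 (right_mem_incident hu)
  have h2 := levelCard_update_add F k 2 (right_mem_incident hu)
  have := h.half_source
  have := h.full_source
  refine ⟨update_le_two h.le_two (by omega), fun e ↦ update_eq_of_ne_one ha,
    halves_update_lt ha (by omega), fun z hzs hzu ↦ h.isLocallyBasic_update hu hv hzs hzu hzu,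
    ?_, ?_⟩
  all_goals obtain rfl | rfl := hk <;> simp [ha] at h1 h2 <;> omega

lemma extend (h : G.IsHalfPath s F u v) (huv : u ≠ v) (hw : G.ends a = s(v, w)) (ha : F a = 1)
    (hk : k = 0 ∨ k = 2) (hv : IsLocallyBasic (Function.update F a k) (G.incident v))
    (hws : w ≠ s) (hwu : w ≠ u) (hwv : w ≠ v) :
    G.IsHalfPath s (Function.update F a k) u w := by
  have hau : a ∉ G.incident u := by simp [mem_incident_iff_of_ends hw, huv, hwu.symm]
  have h1 := levelCard_update_add F k 1 (right_mem_incident hw)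
  have h2 := levelCard_update_add F k 2 (right_mem_incident hw)
  have hwF := h.isLocallyBasic w hws hwu hwv
  have hpos : levelCard F 1 (G.incident w) ≠ 0 := fun h0 ↦
    levelCard_eq_zero.1 h0 a (right_mem_incident hw) ha
  unfold IsLocallyBasic at hwF
  refine ⟨update_le_two h.le_two (by omega), fun e he ↦ ?_,
    fun z hzs hzu hzw ↦ h.isLocallyBasic_update hw hv hzs hzu hzw, ?_, ?_, ?_, ?_⟩
  · rw [update_eq_of_ne_one ha (h.ne_one e he)]
    exact h.ne_one e he
  · rw [levelCard_update_of_notMem hau, h.half_source]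
  · rw [levelCard_update_of_notMem hau]
    exact h.full_source
  all_goals obtain rfl | rfl := hk <;> simp [ha] at h1 h2 <;> omega

end IsHalfPath

lemma IsPrebasic.isHalfPath_update (hF : G.IsPrebasic s F) (hu : u ≠ s) (hw : G.ends a = s(u, w))
    (hws : w ≠ s) (ha : F a = 1) : G.IsHalfPath s (Function.update F a 0) u w := by
  have source_or_target {z : V} (hz : z ≠ s) (haz : a ∈ G.incident z) :
      levelCard (Function.update F a 0) 1 (G.incident z) = 1 ∧
        levelCard (Function.update F a 0) 2 (G.incident z) ≤ 1 := by
    have h1 := levelCard_update_add F 0 1 haz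
    have h2 := levelCard_update_add F 0 2 haz
    have hzF := hF.isLocallyBasic z hz
    have hpos : levelCard F 1 (G.incident z) ≠ 0 := fun h0 ↦ levelCard_eq_zero.1 h0 a haz ha
    simp only [ha, Nat.reduceEqDiff, if_true, if_false] at h1 h2
    unfold IsLocallyBasic at hzF
    omega
  have hsource := source_or_target hu (left_mem_incident hw)
  have htarget := source_or_target hws (right_mem_incident hw)
  refine ⟨update_le_two hF.le_two (by omega), fun e he ↦ ?_, fun z hzs hzu hzw ↦ ?_,
    hsource.1, hsource.2, htarget.1, htarget.2.trans one_le_two⟩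
  · rw [update_eq_of_ne_one ha (hF.ne_one e he)]
    exact hF.ne_one e he
  · rw [isLocallyBasic_update_of_notMem (by simp [mem_incident_iff_of_ends hw, hzu, hzw])]
    exact hF.isLocallyBasic z hzs

end DecidableEdges

lemma IsHalfPath.exists_roundsAt (hG : G.LoopsOnlyAt s) (huv : u ≠ v) (h : G.IsHalfPath s F u v) :
    ∃ F', G.RoundsAt s u F F' := by
  classical
  induction hn : levelCard F 1 univ using Nat.strong_induction_on generalizing F v with
  | _ n ih =>
  obtain ⟨a, hav, ha⟩ : ∃ a ∈ G.incident v, F a = 1 := by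
    by_contra! hne
    simpa [levelCard_eq_zero.2 hne] using h.half_target
  obtain ⟨w, hws, hwv, hw⟩ := hG.exists_ends_eq_of_half h.ne_one hav ha
  obtain ⟨k, hk, hkv⟩ := h.exists_isLocallyBasic_update hav ha
  obtain rfl | hwu := eq_or_ne w u
  · exact ⟨_, h.roundsAt_update hw ha hk hkv⟩
  · have hk1 : k ≠ 1 := by omega
    obtain ⟨F', hF'⟩ := ih _ (hn ▸ halves_update_lt ha hk1) hwu.symm
      (h.extend huv hw ha hk hkv hws hwu hwv) rfl
    exact ⟨F', hF'.of_update ha hk1⟩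

lemma IsPrebasic.exists_roundsAt (hF : G.IsPrebasic s F) (hG : G.LoopsOnlyAt s) (hu : u ≠ s)
    (hhalf : levelCard F 1 (G.incident u) ≠ 0) : ∃ F', G.RoundsAt s u F F' := by
  classical
  obtain ⟨a, hau, ha⟩ : ∃ a ∈ G.incident u, F a = 1 := by
    by_contra! hne
    exact hhalf (levelCard_eq_zero.2 hne)
  obtain ⟨w, hws, hwu, hw⟩ := hG.exists_ends_eq_of_half hF.ne_one hau ha
  obtain ⟨F', hF'⟩ := (hF.isHalfPath_update hu hw hws ha).exists_roundsAt hG hwu.symm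
  exact ⟨F', hF'.of_update ha zero_ne_one⟩

end Rounding

section Alternating

variable {V E : Type} {G : Multigraph V E} {s u v : V} {e : E}

/-- A spoke is an edge at `s` that is not a loop. -/
def IsSpoke (G : Multigraph V E) (s : V) (e : E) : Prop := s ∈ G.ends e ∧ ¬ (G.ends e).IsDiag

lemma isSpoke_iff : G.IsSpoke s e ↔ ∃ w ≠ s, G.ends e = s(s, w) := by
  refine ⟨fun ⟨hs, he⟩ ↦ ?_, fun ⟨w, hw, he⟩ ↦ ?_⟩
  · obtain ⟨w, hw⟩ := Sym2.mem_iff_exists.1 hs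
    exact ⟨w, fun h ↦ he (by simp [hw, h]), hw⟩
  · exact ⟨by simp [he], by simpa [he] using hw.symm⟩

variable [DecidableEq V] [Fintype E] {F F' : E → ℕ} {X : Finset E}

lemma notMem_incident_of_ends (he : G.ends e = s(s, u)) (hs : v ≠ s) (hu : v ≠ u) :
    e ∉ G.incident v := by
  simp [mem_incident_iff_of_ends he, hs, hu]

/-- Relative to the reference set `X`, a spoke is active if an augmentation may raise it from `0`
to `1`, or, for spokes in `X`, lower it from `1` to `0`. -/
def IsActive (G : Multigraph V E) (s : V) (F : E → ℕ) (X : Finset E) (e : E) : Prop :=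
  G.IsSpoke s e ∧ (F e = 0 ∧ e ∉ X ∨ F e = 2 ∧ e ∈ X)

/-- The first outcome of an augmentation: a packing that differs from `F` at `s` in exactly one
active spoke. -/
def HasFlip (G : Multigraph V E) (s : V) (F : E → ℕ) (X : Finset E) : Prop :=
  ∃ F' g, G.IsPrebasic s F' ∧ G.IsActive s F X g ∧ F' g = 2 - F g ∧
    ∀ e ∈ G.incident s, e ≠ g → F' e = F e

/-- `C` is the edge set of a cycle through `s` with edges `g₁`, `g₂` at `s`, along which `F` can be
augmented. -/
structure IsAlternatingCycle [DecidableEq E] (G : Multigraph V E) (s : V) (F : E → ℕ)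
    (C : Finset E) (g₁ g₂ : E) : Prop where
  ne : g₁ ≠ g₂
  mem_iff : ∀ e ∈ G.incident s, e ∈ C ↔ e = g₁ ∨ e = g₂
  inter_incident : ∀ v ≠ s, C ∩ G.incident v = ∅ ∨
    ∃ a b, CanPass F (G.incident v) a b ∧ C ∩ G.incident v = {a, b}

/-- The second outcome of an augmentation: after a change of `F` away from `s`, an alternating
cycle with two active spokes. -/
def HasAlternatingCycle [DecidableEq E] (G : Multigraph V E) (s : V) (F : E → ℕ) (X : Finset E) :
    Prop :=
  ∃ F' C g₁ g₂, G.IsPrebasic s F' ∧ (∀ e ∈ G.incident s, F' e = F e) ∧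
    G.IsActive s F X g₁ ∧ G.IsActive s F X g₂ ∧ G.IsAlternatingCycle s F' C g₁ g₂

variable [DecidableEq E] {C : Finset E} {g₁ g₂ e' : E}

namespace IsAlternatingCycle

lemma symm (h : G.IsAlternatingCycle s F C g₁ g₂) : G.IsAlternatingCycle s F C g₂ g₁ :=
  ⟨h.ne.symm, fun e he ↦ (h.mem_iff e he).trans or_comm, h.inter_incident⟩

lemma isLocallyBasic_of_eq_one (h : G.IsAlternatingCycle s F C g₁ g₂) (hF : G.IsPrebasic s F)
    (hv : v ≠ s) (hC : ∀ e ∈ G.incident v, e ∈ C → F' e = 1)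
    (hnC : ∀ e ∈ G.incident v, e ∉ C → F' e = F e) : IsLocallyBasic F' (G.incident v) := by
  obtain hv0 | ⟨a, b, hab, hCab⟩ := h.inter_incident v hv
  · refine (isLocallyBasic_congr fun e he ↦ hnC e he fun heC ↦ ?_).2 (hF.isLocallyBasic v hv)
    simpa [hv0] using mem_inter.2 ⟨heC, he⟩
  · have hmem (e) : e ∈ C ∧ e ∈ G.incident v ↔ e = a ∨ e = b := by
      simpa using Finset.ext_iff.1 hCab e
    refine hab.isLocallyBasic_of_eq_one (fun e _ ↦ hF.le_two e) (hF.isLocallyBasic v hv)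
      (fun e he ↦ ?_) (hC a hab.left_mem ((hmem a).2 (.inl rfl)).1)
      (hC b hab.right_mem ((hmem b).2 (.inr rfl)).1)
    obtain ⟨hev, hne⟩ := mem_sdiff.1 he
    exact hnC e hev fun heC ↦ hne (by simpa using (hmem e).1 ⟨heC, hev⟩)

end IsAlternatingCycle

lemma hasAlternatingCycle_of_parallel (hF : G.IsPrebasic s F) (hu : u ≠ s)
    (he : G.ends e = s(s, u)) (he' : G.ends e' = s(s, u)) (hact : G.IsActive s F X e)
    (hact' : G.IsActive s F X e') (hpass : CanPass F (G.incident u) e e') :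
    G.HasAlternatingCycle s F X := by
  refine ⟨F, {e, e'}, e, e', hF, fun _ _ ↦ rfl, hact, hact', hpass.ne, by simp, fun v hv ↦ ?_⟩
  obtain rfl | hvu := eq_or_ne v u
  · refine .inr ⟨e, e', hpass, inter_eq_left.2 ?_⟩
    simp [insert_subset_iff, hpass.left_mem, hpass.right_mem]
  · left
    simp [insert_inter_of_notMem, singleton_inter_of_notMem, notMem_incident_of_ends he hv hvu,
      notMem_incident_of_ends he' hv hvu]

end Alternating

section Contraction

variable {V E : Type} [DecidableEq V] {G : Multigraph V E} {s u v : V} {e : E}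

/-- The contraction of `u` into `s`. It keeps `u` as an isolated vertex. -/
def contract (G : Multigraph V E) (s u : V) : Multigraph V E :=
  ⟨fun e ↦ (G.ends e).map fun v ↦ if v = u then s else v⟩

lemma ends_contract {a b : V} (h : G.ends e = s(a, b)) :
    (G.contract s u).ends e = s(if a = u then s else a, if b = u then s else b) := by
  simp [contract, h]

lemma mem_ends_contract (hs : v ≠ s) (hu : v ≠ u) :
    v ∈ (G.contract s u).ends e ↔ v ∈ G.ends e := by
  obtain ⟨a, b, hab⟩ : ∃ a b, G.ends e = s(a, b) := Sym2.exists.1 ⟨_, rfl⟩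
  rw [ends_contract hab, hab]
  grind

lemma notMem_ends_contract (hu : u ≠ s) : u ∉ (G.contract s u).ends e := by
  obtain ⟨a, b, hab⟩ : ∃ a b, G.ends e = s(a, b) := Sym2.exists.1 ⟨_, rfl⟩
  rw [ends_contract hab]
  grind

lemma source_mem_ends_contract : s ∈ (G.contract s u).ends e ↔ s ∈ G.ends e ∨ u ∈ G.ends e := by
  obtain ⟨a, b, hab⟩ : ∃ a b, G.ends e = s(a, b) := Sym2.exists.1 ⟨_, rfl⟩
  rw [ends_contract hab, hab]
  grind

lemma LoopsOnlyAt.contract (hG : G.LoopsOnlyAt s) : (G.contract s u).LoopsOnlyAt s := by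
  intro e v hv
  obtain ⟨a, b, hab⟩ : ∃ a b, G.ends e = s(a, b) := Sym2.exists.1 ⟨_, rfl⟩
  rw [ends_contract hab] at hv
  grind [LoopsOnlyAt, Sym2.eq_iff]

lemma isSpoke_contract_iff (hu : u ≠ s) : (G.contract s u).IsSpoke s e ↔
    ∃ w, w ≠ s ∧ w ≠ u ∧ (G.ends e = s(s, w) ∨ G.ends e = s(u, w)) := by
  obtain ⟨a, b, hab⟩ : ∃ a b, G.ends e = s(a, b) := Sym2.exists.1 ⟨_, rfl⟩
  rw [isSpoke_iff, ends_contract hab, hab]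
  grind [Sym2.eq_iff]

lemma IsSpoke.of_contract (h : (G.contract s u).IsSpoke s e) (hu : u ≠ s) (he : u ∉ G.ends e) :
    G.IsSpoke s e := by
  obtain ⟨w, hws, -, hw | hw⟩ := (isSpoke_contract_iff hu).1 h
  · exact isSpoke_iff.2 ⟨w, hws, hw⟩
  · simp [hw] at he

lemma IsSpoke.notMem_of_contract (h : (G.contract s u).IsSpoke s e) (hu : u ≠ s)
    (he : u ∈ G.ends e) : s ∉ G.ends e := by
  obtain ⟨w, hws, hwu, hw | hw⟩ := (isSpoke_contract_iff hu).1 h <;> rw [hw, Sym2.mem_iff] at he ⊢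
  · exact (he.elim hu hwu.symm).elim
  · exact not_or.2 ⟨hu.symm, hws.symm⟩

variable [Fintype E] {F F' : E → ℕ} {X X' : Finset E} {g : E}

lemma incident_contract (hs : v ≠ s) (hu : v ≠ u) :
    (G.contract s u).incident v = G.incident v := by
  ext e
  rw [mem_incident, mem_incident, mem_ends_contract hs hu]

lemma incident_contract_self (hu : u ≠ s) : (G.contract s u).incident u = ∅ :=
  eq_empty_of_forall_notMem fun _ he ↦ notMem_ends_contract hu (mem_incident.1 he)

lemma mem_incident_contract_source :
    e ∈ (G.contract s u).incident s ↔ e ∈ G.incident s ∨ e ∈ G.incident u := by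
  simp_rw [mem_incident, source_mem_ends_contract]

lemma IsPrebasic.contract (hF : G.IsPrebasic s F) (hu : u ≠ s)
    (hhalf : levelCard F 1 (G.incident u) = 0) : (G.contract s u).IsPrebasic s F where
  le_two := hF.le_two
  ne_one e he := (mem_incident_contract_source.1 he).elim (hF.ne_one e)
    (levelCard_eq_zero.1 hhalf e)
  isLocallyBasic v hv := by
    obtain rfl | hvu := eq_or_ne v u
    · rw [incident_contract_self hu]
      exact .inl ⟨rfl, rfl⟩
    · rw [incident_contract hv hvu]
      exact hF.isLocallyBasic v hv

lemma IsPrebasic.of_contract (hF : (G.contract s u).IsPrebasic s F)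
    (hu : IsLocallyBasic F (G.incident u)) : G.IsPrebasic s F where
  le_two := hF.le_two
  ne_one e he := hF.ne_one e (mem_incident_contract_source.2 (.inl he))
  isLocallyBasic v hv := by
    obtain rfl | hvu := eq_or_ne v u
    · exact hu
    · rw [← incident_contract hv hvu]
      exact hF.isLocallyBasic v hv

/-- The active spoke `e` can be contracted, replacing the reference set `X` by `X'`: every active
spoke of the contraction that comes from `u` continues `e` through `u`. -/
structure IsContractible (G : Multigraph V E) (s u : V) (F : E → ℕ) (X X' : Finset E) (e : E) :
    Prop where
  isPrebasic : G.IsPrebasic s F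
  ne : u ≠ s
  ends_eq : G.ends e = s(s, u)
  isActive : G.IsActive s F X e
  no_half : levelCard F 1 (G.incident u) = 0
  mem_iff : ∀ g ∉ G.incident u, g ∈ X' ↔ g ∈ X
  turn : ∀ g ∈ G.incident u, (G.contract s u).IsActive s F X' g →
    levelCard F 2 (G.incident u) = 0 ∨ F e = 2 ∨ F g = 2

namespace IsContractible

lemma mem_incident_left (h : G.IsContractible s u F X X' e) : e ∈ G.incident s :=
  left_mem_incident h.ends_eq

lemma notMem_incident_source (h : G.IsContractible s u F X X' e)
    (hg : (G.contract s u).IsActive s F X' g) (hgu : g ∈ G.incident u) : g ∉ G.incident s := by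
  rw [mem_incident]
  exact hg.1.notMem_of_contract h.ne (mem_incident.1 hgu)

lemma canPass (h : G.IsContractible s u F X X' e) (hg : (G.contract s u).IsActive s F X' g)
    (hgu : g ∈ G.incident u) : CanPass F (G.incident u) e g where
  ne := ne_of_mem_of_not_mem h.mem_incident_left (h.notMem_incident_source hg hgu)
  left_mem := right_mem_incident h.ends_eq
  right_mem := hgu
  no_half := h.no_half
  turn := h.turn g hgu hg

lemma isActive_of_contract (h : G.IsContractible s u F X X' e)
    (hg : (G.contract s u).IsActive s F X' g) (hgu : g ∉ G.incident u) : G.IsActive s F X g := by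
  refine ⟨hg.1.of_contract h.ne (mt mem_incident.2 hgu), ?_⟩
  rw [← h.mem_iff g hgu]
  exact hg.2

lemma hasFlip (h : G.IsContractible s u F X X' e)
    (hflip : (G.contract s u).HasFlip s F X') : G.HasFlip s F X := by
  classical
  obtain ⟨F', g, hF', hg, hF'g, hag⟩ := hflip
  have hag_s (d) (hd : d ∈ G.incident s) := hag d (mem_incident_contract_source.2 (.inl hd))
  have hag_u (d) (hd : d ∈ G.incident u) := hag d (mem_incident_contract_source.2 (.inr hd))
  have hu := h.isPrebasic.isLocallyBasic u h.ne
  by_cases hgu : g ∈ G.incident u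
  · have hpass := h.canPass hg hgu
    have hgs := h.notMem_incident_source hg hgu
    refine ⟨Function.update F' e (2 - F e), e, ⟨?_, fun d hd ↦ ?_, fun v hv ↦ ?_⟩, h.isActive,
      by simp, fun d hd hde ↦ ?_⟩
    · exact update_le_two hF'.le_two (Nat.sub_le _ _)
    · obtain rfl | hde := eq_or_ne d e
      · have := h.isPrebasic.ne_one d hd
        simp only [Function.update_self]
        omega
      · simpa [hde] using hF'.ne_one d (mem_incident_contract_source.2 (.inl hd))
    · obtain rfl | hvu := eq_or_ne v u
      · refine hpass.isLocallyBasic_of_eq_two_sub (fun d _ ↦ h.isPrebasic.le_two d) hu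
          (fun d hd ↦ ?_) (by simp) (by simp [hpass.ne.symm, hF'g])
        simp only [mem_sdiff, mem_insert, mem_singleton, not_or] at hd
        rw [Function.update_of_ne hd.2.1, hag_u d hd.1 hd.2.2]
      · rw [isLocallyBasic_update_of_notMem (notMem_incident_of_ends h.ends_eq hv hvu),
          ← incident_contract hv hvu]
        exact hF'.isLocallyBasic v hv
    · rw [Function.update_of_ne hde, hag_s d hd (ne_of_mem_of_not_mem hd hgs)]
  · refine ⟨F', g, hF'.of_contract ?_, h.isActive_of_contract hg hgu, hF'g, hag_s⟩
    exact (isLocallyBasic_congr fun d hd ↦ hag_u d hd (ne_of_mem_of_not_mem hd hgu)).2 hu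

variable [DecidableEq E] {C : Finset E} {g₁ g₂ : E}

lemma hasAlternatingCycle_of_notMem_of_notMem (h : G.IsContractible s u F X X' e)
    (hF' : (G.contract s u).IsPrebasic s F')
    (hag : ∀ d ∈ (G.contract s u).incident s, F' d = F d)
    (hg₁ : (G.contract s u).IsActive s F X' g₁) (hg₂ : (G.contract s u).IsActive s F X' g₂)
    (hC : (G.contract s u).IsAlternatingCycle s F' C g₁ g₂)
    (hu₁ : g₁ ∉ G.incident u) (hu₂ : g₂ ∉ G.incident u) : G.HasAlternatingCycle s F X := by
  simp only [mem_incident_contract_source, or_imp, forall_and] at hag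
  have hmem := hC.mem_iff
  simp only [mem_incident_contract_source, or_imp, forall_and] at hmem
  refine ⟨F', C, g₁, g₂, hF'.of_contract ?_, hag.1, h.isActive_of_contract hg₁ hu₁,
    h.isActive_of_contract hg₂ hu₂, hC.ne, hmem.1, fun v hv ↦ ?_⟩
  · exact (isLocallyBasic_congr hag.2).2 (h.isPrebasic.isLocallyBasic u h.ne)
  · obtain rfl | hvu := eq_or_ne v u
    · left
      ext d
      have := hmem.2 d
      grind
    · rw [← incident_contract hv hvu]
      exact hC.inter_incident v hv

lemma hasAlternatingCycle_of_mem_of_notMem (h : G.IsContractible s u F X X' e)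
    (hF' : (G.contract s u).IsPrebasic s F')
    (hag : ∀ d ∈ (G.contract s u).incident s, F' d = F d)
    (hg₁ : (G.contract s u).IsActive s F X' g₁) (hg₂ : (G.contract s u).IsActive s F X' g₂)
    (hC : (G.contract s u).IsAlternatingCycle s F' C g₁ g₂)
    (hu₁ : g₁ ∈ G.incident u) (hu₂ : g₂ ∉ G.incident u) : G.HasAlternatingCycle s F X := by
  have hpass := h.canPass hg₁ hu₁
  have hs₁ := h.notMem_incident_source hg₁ hu₁
  simp only [mem_incident_contract_source, or_imp, forall_and] at hag
  have hmem := hC.mem_iff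
  simp only [mem_incident_contract_source, or_imp, forall_and] at hmem
  refine ⟨F', insert e C, e, g₂, hF'.of_contract ?_, hag.1, h.isActive,
    h.isActive_of_contract hg₂ hu₂, ne_of_mem_of_not_mem hpass.left_mem hu₂, fun d hd ↦ ?_,
    fun v hv ↦ ?_⟩
  · exact (isLocallyBasic_congr hag.2).2 (h.isPrebasic.isLocallyBasic u h.ne)
  · have := ne_of_mem_of_not_mem hd hs₁
    simp [hmem.1 d hd, this]
  · obtain rfl | hvu := eq_or_ne v u
    · refine .inr ⟨e, g₁, hpass.congr hag.2, ?_⟩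
      ext d
      have := hmem.2 d
      have := hpass.left_mem
      grind
    · rw [insert_inter_of_notMem (notMem_incident_of_ends h.ends_eq hv hvu),
        ← incident_contract hv hvu]
      exact hC.inter_incident v hv

lemma hasFlip_of_mem_of_mem (h : G.IsContractible s u F X X' e)
    (hF' : (G.contract s u).IsPrebasic s F')
    (hag : ∀ d ∈ (G.contract s u).incident s, F' d = F d)
    (hg₁ : (G.contract s u).IsActive s F X' g₁) (hg₂ : (G.contract s u).IsActive s F X' g₂)
    (hC : (G.contract s u).IsAlternatingCycle s F' C g₁ g₂)
    (hu₁ : g₁ ∈ G.incident u) (hu₂ : g₂ ∈ G.incident u) : G.HasFlip s F X := by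
  have hpass₁ := h.canPass hg₁ hu₁
  have hpass₂ := h.canPass hg₂ hu₂
  have hs₁ := h.notMem_incident_source hg₁ hu₁
  have hs₂ := h.notMem_incident_source hg₂ hu₂
  simp only [mem_incident_contract_source, or_imp, forall_and] at hag
  have hmem := hC.mem_iff
  simp only [mem_incident_contract_source, or_imp, forall_and] at hmem
  have hCs {d} (hd : d ∈ G.incident s) : d ∉ C := fun hdC ↦ by
    obtain rfl | rfl := (hmem.1 d hd).1 hdC
    exacts [hs₁ hd, hs₂ hd]
  have heC : e ∉ C := hCs h.mem_incident_left
  -- In `G` the cycle `C` closes at `u`: it becomes half-integral and `e` leads to it.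
  let F'' : E → ℕ := fun d ↦ if d = e then 2 - F e else if d ∈ C then 1 else F' d
  have hF''C {d} (hd : d ∈ C) : F'' d = 1 := by grind
  have hF''nC {d} (hd : d ≠ e) (hdC : d ∉ C) : F'' d = F' d := by grind
  have hF''s {d} (hd : d ∈ G.incident s) (hde : d ≠ e) : F'' d = F d := by
    rw [hF''nC hde (hCs hd), hag.1 d hd]
  refine ⟨F'', e, ⟨fun d ↦ ?_, fun d hd ↦ ?_, fun v hv ↦ ?_⟩, h.isActive, by simp [F''],
    fun d ↦ hF''s⟩
  · have := hF'.le_two d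
    grind
  · have := h.isPrebasic.ne_one d hd
    by_cases hde : d = e
    · grind
    · rwa [hF''s hd hde]
  · obtain rfl | hvu := eq_or_ne v u
    · refine hpass₁.isLocallyBasic_lollipop hpass₂ hC.ne (fun d _ ↦ h.isPrebasic.le_two d)
        (h.isPrebasic.isLocallyBasic v hv) (fun d hd ↦ ?_) (by simp [F''])
        (hF''C ((hmem.2 g₁ hu₁).2 (.inl rfl))) (hF''C ((hmem.2 g₂ hu₂).2 (.inr rfl)))
      simp only [mem_sdiff, mem_insert, mem_singleton, not_or] at hd
      rw [hF''nC hd.2.1 (by simp [hmem.2 d hd.1, hd.2]), hag.2 d hd.1]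
    · have hev := notMem_incident_of_ends h.ends_eq hv hvu
      rw [← incident_contract hv hvu] at hev ⊢
      exact hC.isLocallyBasic_of_eq_one hF' hv (fun d _ ↦ hF''C)
        fun d hd ↦ hF''nC (ne_of_mem_of_not_mem hd hev)

lemma hasFlip_or_hasAlternatingCycle (h : G.IsContractible s u F X X' e)
    (hcyc : (G.contract s u).HasAlternatingCycle s F X') :
    G.HasFlip s F X ∨ G.HasAlternatingCycle s F X := by
  obtain ⟨F', C, g₁, g₂, hF', hag, hg₁, hg₂, hC⟩ := hcyc
  by_cases hu₁ : g₁ ∈ G.incident u <;> by_cases hu₂ : g₂ ∈ G.incident u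
  · exact .inl (h.hasFlip_of_mem_of_mem hF' hag hg₁ hg₂ hC hu₁ hu₂)
  · exact .inr (h.hasAlternatingCycle_of_mem_of_notMem hF' hag hg₁ hg₂ hC hu₁ hu₂)
  · exact .inr (h.hasAlternatingCycle_of_mem_of_notMem hF' hag hg₂ hg₁ hC.symm hu₂ hu₁)
  · exact .inr (h.hasAlternatingCycle_of_notMem_of_notMem hF' hag hg₁ hg₂ hC hu₁ hu₂)

end IsContractible

end Contraction

section Potential

variable {V E : Type} {G : Multigraph V E} {s u : V} {B B' : Finset E} {x : V → ℝ} {p : E → V → ℝ}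

/-- A potential certifies that the vertex weights `x` give total weight at least `1` to every
closed walk from `s` without U-turns that avoids the edges in `B`: the value `p e v` bounds from
below the weight of such a walk up to `v` when it arrives there through `e`, truncated at `1`. -/
structure IsPotential (G : Multigraph V E) (s : V) (B : Finset E) (x : V → ℝ) (p : E → V → ℝ) :
    Prop where
  nonneg : ∀ e v, 0 ≤ p e v
  le_one : ∀ e v, p e v ≤ 1
  source : ∀ e, p e s = 1
  le_of_start : ∀ e v, v ≠ s → e ∉ B → G.ends e = s(s, v) → p e v ≤ x v
  le_add : ∀ e e' v w, v ≠ s → e ≠ e' → e' ∉ B → G.ends e' = s(v, w) → p e' w ≤ p e v + x w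

lemma HalfIntegral.nonneg (hx : HalfIntegral x) (v : V) : 0 ≤ x v := by
  rcases hx v with h | h | h <;> norm_num [h]

variable [DecidableEq V]

lemma IsPotential.of_contract (h : (G.contract s u).IsPotential s B' x p) (hG : G.LoopsOnlyAt s)
    (hu : u ≠ s) (hx : ∀ v, 0 ≤ x v) (hxs : x s = 0) {r : E} (hru : u ∈ G.ends r)
    (hB' : ∀ d ∉ B, d ≠ r → d ∉ B') (hr : ∀ d ∉ B, G.ends d = s(s, u) → d = r) :
    ∃ p', G.IsPotential s B x p' := by
  classical
  -- A walk which reaches `u` through an edge other than `r` is closed in the contraction. After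
  -- reaching `u` through `r`, a walk leaves it as a walk of the contraction that starts at `s`.
  refine ⟨fun e v ↦ if v = u then if e = r then 0 else 1 else p e v, fun e v ↦ ?_, fun e v ↦ ?_,
    fun e ↦ by simp [hu.symm, h.source], fun e v hv he hev ↦ ?_, fun e e' v w hv hne he' hvw ↦ ?_⟩
  · have := h.nonneg e v
    split_ifs <;> simp_all
  · have := h.le_one e v
    split_ifs <;> simp_all
  · obtain rfl | hvu := eq_or_ne v u
    · simpa [hr e he hev] using hx v
    · simp only [hvu, if_false]
      refine h.le_of_start e v hv (hB' e he ?_) (by simp [ends_contract hev, hu.symm, hvu])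
      rintro rfl
      simp [hev, hu, hvu.symm] at hru
  · have hends := ends_contract (u := u) (s := s) hvw
    obtain rfl | hvu := eq_or_ne v u
    · have hwv : w ≠ v := fun hwv ↦ hv (hG e' v (by rw [hvw, hwv]))
      simp only [if_true, hwv, if_false]
      split_ifs with her
      · have hws : w ≠ s := fun hws ↦
          hne (her.trans (hr e' he' (by rw [hvw, hws, Sym2.eq_swap])).symm)
        rw [zero_add]
        exact h.le_of_start e' w hws (hB' e' he' (her ▸ hne.symm)) (by simpa [hwv] using hends)
      · linarith [h.le_one e' w, hx w]
    · simp only [hvu, if_false] at hends ⊢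
      obtain rfl | hwu := eq_or_ne w u
      · simp only [if_true]
        split_ifs with her
        · exact add_nonneg (h.nonneg e v) (hx w)
        · have := h.le_add e e' v s hv hne (hB' e' he' her) (by simpa using hends)
          linarith [h.source e', hx w]
      · simp only [hwu, if_false] at hends ⊢
        refine h.le_add e e' v w hv hne (hB' e' he' ?_) hends
        rintro rfl
        simp [hvw, hvu.symm, hwu.symm] at hru

lemma IsPotential.of_contract_update (h : (G.contract s u).IsPotential s B' x p) (hu : u ≠ s)
    (hx : ∀ v, 0 ≤ x v) (hB' : ∀ d ∉ B, u ∉ G.ends d → d ∉ B') :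
    ∃ p', G.IsPotential s B (Function.update x u 1) p' := by
  refine ⟨fun e v ↦ if v = u then 1 else p e v, fun e v ↦ ?_, fun e v ↦ ?_,
    fun e ↦ by simp [hu.symm, h.source], fun e v hv he hev ↦ ?_, fun e e' v w hv hne he' hvw ↦ ?_⟩
  · have := h.nonneg e v
    split_ifs <;> simp_all
  · have := h.le_one e v
    split_ifs <;> simp_all
  · obtain rfl | hvu := eq_or_ne v u
    · simp
    · simp only [hvu, if_false, Function.update_of_ne, ne_eq, not_false_eq_true]
      exact h.le_of_start e v hv (hB' e he (by simp [hev, hu, hvu.symm]))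
        (by simp [ends_contract hev, hu.symm, hvu])
  · obtain rfl | hwu := eq_or_ne w u
    · have := h.nonneg e v
      simp only [if_true, Function.update_self]
      split_ifs <;> linarith
    simp only [hwu, if_false, Function.update_of_ne, ne_eq, not_false_eq_true]
    obtain rfl | hvu := eq_or_ne v u
    · simp only [if_true]
      linarith [h.le_one e' w, hx w]
    · simp only [hvu, if_false]
      exact h.le_add e e' v w hv hne (hB' e' he' (by simp [hvw, hvu.symm, hwu.symm]))
        (by simp [ends_contract hvw, hvu, hwu])

end Potential

section DualCertificate

variable {V E : Type} {G : Multigraph V E} {s v : V} {F : E → ℕ} {X : Finset E} {e : E}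

open Classical in
/-- The contribution of `e` to `spokeValue`. -/
noncomputable def spokeTerm (G : Multigraph V E) (s : V) (F : E → ℕ) (X : Finset E) (e : E) : ℤ :=
  if G.IsSpoke s e ∧ F e = 2 then if e ∈ X then -1 else 1 else 0

lemma spokeTerm_of_ne_two (he : F e ≠ 2) : G.spokeTerm s F X e = 0 := by
  simp [spokeTerm, he]

variable [Fintype E]

/-- Twice the size of the packing `F`, except that the spokes in the reference set `X` count
negatively. -/
noncomputable def spokeValue (G : Multigraph V E) (s : V) (F : E → ℕ) (X : Finset E) : ℤ :=
  ∑ e, G.spokeTerm s F X e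

/-- The third outcome of an augmentation: a half-integral cover, with respect to walks avoiding
`X`, whose size is at most that of the packing `F`. -/
def HasDualCertificate [Fintype V] (G : Multigraph V E) (s : V) (F : E → ℕ) (X : Finset E) :
    Prop :=
  ∃ x p, HalfIntegral x ∧ x s = 0 ∧ G.IsPotential s X x p ∧ 2 * ∑ v, x v ≤ G.spokeValue s F X

section Terminal

variable [DecidableEq V]

/-- The spokes to `v` of value `1`. -/
def fullSpokes (G : Multigraph V E) (s : V) (F : E → ℕ) (v : V) : Finset E :=
  {e | v ≠ s ∧ G.ends e = s(s, v) ∧ F e = 2}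

lemma mem_fullSpokes : e ∈ G.fullSpokes s F v ↔ v ≠ s ∧ G.ends e = s(s, v) ∧ F e = 2 := by
  simp [fullSpokes]

lemma fullSpokes_source : G.fullSpokes s F s = ∅ := by
  simp [fullSpokes]

lemma IsPrebasic.card_fullSpokes_le_two (hF : G.IsPrebasic s F) : #(G.fullSpokes s F v) ≤ 2 := by
  obtain rfl | hv := eq_or_ne v s
  · simp [fullSpokes_source]
  · have hsub : #(G.fullSpokes s F v) ≤ levelCard F 2 (G.incident v) := by
      refine card_le_card fun e he ↦ ?_
      obtain ⟨-, hev, he2⟩ := mem_fullSpokes.1 he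
      exact mem_filter.2 ⟨right_mem_incident hev, he2⟩
    have := hF.isLocallyBasic v hv
    unfold IsLocallyBasic at this
    omega

lemma sum_card_fullSpokes_le_spokeValue [Fintype V] (hact : ∀ e, ¬ G.IsActive s F X e) :
    (∑ v, #(G.fullSpokes s F v) : ℕ) ≤ G.spokeValue s F X := by
  classical
  have hterm (e) : G.spokeTerm s F X e = if G.IsSpoke s e ∧ F e = 2 then 1 else 0 := by
    have := hact e
    simp only [IsActive, spokeTerm] at this ⊢
    split_ifs <;> tauto
  rw [← card_biUnion]
  · simp_rw [spokeValue, hterm, sum_boole]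
    refine Nat.cast_le.2 (card_le_card fun e he ↦ ?_)
    obtain ⟨v, -, hv⟩ := mem_biUnion.1 he
    obtain ⟨hvs, hev, he2⟩ := mem_fullSpokes.1 hv
    exact mem_filter.2 ⟨mem_univ e, isSpoke_iff.2 ⟨v, hvs, hev⟩, he2⟩
  · refine fun v _ w _ hvw ↦ disjoint_left.2 fun e hev hew ↦ hvw ?_
    exact Sym2.congr_right.1 ((mem_fullSpokes.1 hev).2.1.symm.trans (mem_fullSpokes.1 hew).2.1)

/-- The vertex weights of the terminal cover: half the number of spokes of value `1`. -/
noncomputable def fullSpokeWeight (G : Multigraph V E) (s : V) (F : E → ℕ) (v : V) : ℝ :=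
  #(G.fullSpokes s F v) / 2

lemma IsPrebasic.halfIntegral_fullSpokeWeight (hF : G.IsPrebasic s F) :
    HalfIntegral (G.fullSpokeWeight s F) := by
  intro v
  have := hF.card_fullSpokes_le_two (v := v)
  rw [fullSpokeWeight]
  interval_cases #(G.fullSpokes s F v) <;> norm_num

lemma half_le_fullSpokeWeight (he : e ∈ G.fullSpokes s F v) : 1 / 2 ≤ G.fullSpokeWeight s F v := by
  have : (1 : ℝ) ≤ #(G.fullSpokes s F v) := mod_cast card_pos.2 ⟨e, he⟩
  rw [fullSpokeWeight]
  linarith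

lemma one_le_fullSpokeWeight {e' : E} (he : e ∈ G.fullSpokes s F v)
    (he' : e' ∈ G.fullSpokes s F v) (hne : e ≠ e') : 1 ≤ G.fullSpokeWeight s F v := by
  have : (2 : ℝ) ≤ #(G.fullSpokes s F v) := mod_cast one_lt_card.2 ⟨e, he, e', he', hne⟩
  rw [fullSpokeWeight]
  linarith

lemma IsPrebasic.mem_fullSpokes_of_not_isActive (hF : G.IsPrebasic s F)
    (hact : ¬ G.IsActive s F X e) (hv : v ≠ s) (he : e ∉ X) (hev : G.ends e = s(s, v)) :
    e ∈ G.fullSpokes s F v := by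
  refine mem_fullSpokes.2 ⟨hv, hev, ?_⟩
  have := hF.le_two e
  have := hF.ne_one e (left_mem_incident hev)
  have : F e ≠ 0 := fun h ↦ hact ⟨isSpoke_iff.2 ⟨v, hv, hev⟩, .inl ⟨h, he⟩⟩
  omega

lemma IsPrebasic.exists_isPotential_fullSpokeWeight (hF : G.IsPrebasic s F)
    (hact : ∀ e, ¬ G.IsActive s F X e) : ∃ p, G.IsPotential s X (G.fullSpokeWeight s F) p := by
  classical
  set x := G.fullSpokeWeight s F
  have hx : HalfIntegral x := hF.halfIntegral_fullSpokeWeight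
  let p : E → V → ℝ := fun e v ↦
    if v = s then 1 else if e ∉ X ∧ G.ends e = s(s, v) then x v else min 1 (1 / 2 + x v)
  have hp_half (e v) : 1 / 2 ≤ p e v := by
    simp only [p]
    split_ifs with hv he
    · norm_num
    · exact half_le_fullSpokeWeight (hF.mem_fullSpokes_of_not_isActive (hact e) hv he.1 he.2)
    · exact le_min (by norm_num) (by linarith [hx.nonneg v])
  refine ⟨p, fun e v ↦ by linarith [hp_half e v], fun e v ↦ ?_, fun e ↦ by simp [p],
    fun e v hv he hev ↦ by simp [p, hv, he, hev], fun e e' v w hv hne he' hvw ↦ ?_⟩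
  · simp only [p]
    split_ifs
    exacts [le_rfl, by rcases hx v with h | h | h <;> norm_num [h], min_le_left _ _]
  obtain rfl | hws := eq_or_ne w s
  · have he'v := hF.mem_fullSpokes_of_not_isActive (hact e') hv he' (hvw.trans Sym2.eq_swap)
    suffices 1 ≤ p e v by simpa [p] using this.trans (le_add_of_nonneg_right (hx.nonneg w))
    simp only [p, hv, if_false]
    split_ifs with he
    · have hev := hF.mem_fullSpokes_of_not_isActive (hact e) hv he.1 he.2
      exact one_le_fullSpokeWeight hev he'v hne
    · exact le_min le_rfl (by linarith [half_le_fullSpokeWeight he'v])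
  · have hnot : ¬ (e' ∉ X ∧ G.ends e' = s(s, w)) := by
      rw [hvw]
      grind [Sym2.eq_iff]
    simp only [p, hws, hnot, if_false]
    exact (min_le_right _ _).trans (by linarith [hp_half e v])

lemma IsPrebasic.hasDualCertificate [Fintype V] (hF : G.IsPrebasic s F)
    (hact : ∀ e, ¬ G.IsActive s F X e) : G.HasDualCertificate s F X := by
  obtain ⟨p, hp⟩ := hF.exists_isPotential_fullSpokeWeight hact
  refine ⟨_, p, hF.halfIntegral_fullSpokeWeight, by simp [fullSpokeWeight, fullSpokes_source], hp,
    ?_⟩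
  simp_rw [fullSpokeWeight, ← sum_div, mul_div_cancel₀ _ (two_ne_zero' ℝ)]
  exact_mod_cast sum_card_fullSpokes_le_spokeValue hact

end Terminal
end DualCertificate

section Outcome

variable {V E : Type} [DecidableEq V]
  {G : Multigraph V E} {s u : V} {F F' : E → ℕ} {X X' : Finset E} {d e r : E}

lemma spokeTerm_contract_sub_of_mem (hu : u ≠ s) (he : G.ends e = s(s, u)) (hFe : F e = 2)
    (heX : e ∈ X) :
    (G.contract s u).spokeTerm s F X' e - G.spokeTerm s F X e = 1 := by
  have hsp : G.IsSpoke s e := isSpoke_iff.2 ⟨u, hu, he⟩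
  have hnsp : ¬ (G.contract s u).IsSpoke s e := fun h ↦
    h.notMem_of_contract hu (by simp [he]) hsp.1
  simp [spokeTerm, hsp, hnsp, hFe, heX]

variable [Fintype E]

lemma IsSpoke.mem_incident (h : G.IsSpoke s e) : e ∈ G.incident s :=
  Multigraph.mem_incident.2 h.1

lemma IsActive.congr (h : G.IsActive s F' X e) (hF : ∀ e ∈ G.incident s, F' e = F e) :
    G.IsActive s F X e := by
  refine ⟨h.1, ?_⟩
  rw [← hF e h.1.mem_incident]
  exact h.2

lemma spokeValue_congr (hF : ∀ e ∈ G.incident s, F' e = F e) :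
    G.spokeValue s F' X = G.spokeValue s F X := by
  refine sum_congr rfl fun e _ ↦ ?_
  by_cases he : G.IsSpoke s e
  · rw [spokeTerm, spokeTerm, hF e he.mem_incident]
  · simp [spokeTerm, he]

lemma spokeValue_contract (hu : u ≠ s) (hX : ∀ d ∉ G.incident u, d ∈ X' ↔ d ∈ X) :
    (G.contract s u).spokeValue s F X' = G.spokeValue s F X +
      ∑ d ∈ G.incident u, ((G.contract s u).spokeTerm s F X' d - G.spokeTerm s F X d) := by
  rw [← sub_eq_iff_eq_add', spokeValue, spokeValue, ← sum_sub_distrib]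
  refine (sum_subset (subset_univ _) fun d _ hd ↦ ?_).symm
  have hspoke : (G.contract s u).IsSpoke s d ↔ G.IsSpoke s d := by
    refine ⟨fun h ↦ h.of_contract hu (mt mem_incident.2 hd), fun h ↦ ?_⟩
    obtain ⟨w, hws, hw⟩ := isSpoke_iff.1 h
    refine (isSpoke_contract_iff hu).2 ⟨w, hws, ?_, .inl hw⟩
    rintro rfl
    exact hd (right_mem_incident hw)
  have hdX := hX d hd
  unfold spokeTerm
  split_ifs <;> grind

lemma spokeTerm_contract_sub_of_eq_two (hG : G.LoopsOnlyAt s) (hu : u ≠ s)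
    (hd : d ∈ G.incident u) (hFd : F d = 2) (hX' : d ∈ X')
    (hX : G.ends d = s(s, u) → d ∉ X) :
    (G.contract s u).spokeTerm s F X' d - G.spokeTerm s F X d = -1 := by
  obtain ⟨w, hw⟩ := Sym2.mem_iff_exists.1 (mem_incident.1 hd)
  have hwu : w ≠ u := fun h ↦ hu (hG d u (by rw [hw, h]))
  obtain rfl | hws := eq_or_ne w s
  · have hsp : G.IsSpoke w d := isSpoke_iff.2 ⟨u, hu, hw.trans Sym2.eq_swap⟩
    have hnsp : ¬ (G.contract w u).IsSpoke w d := fun h ↦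
      h.notMem_of_contract hu (mem_incident.1 hd) hsp.1
    simp [spokeTerm, hsp, hnsp, hFd, hX (hw.trans Sym2.eq_swap)]
  · have hsp : (G.contract s u).IsSpoke s d := (isSpoke_contract_iff hu).2 ⟨w, hws, hwu, .inr hw⟩
    have hnsp : ¬ G.IsSpoke s d := fun h ↦ by simp [IsSpoke, hw, hu.symm, hws.symm] at h
    simp [spokeTerm, hsp, hnsp, hFd, hX']

/-- The number of edges that are not loops. -/
def nonLoopCard (G : Multigraph V E) : ℕ := #{e | ¬ (G.ends e).IsDiag}

lemma nonLoopCard_contract_lt (hu : u ≠ s) (he : G.ends e = s(s, u)) :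
    (G.contract s u).nonLoopCard < G.nonLoopCard := by
  refine card_lt_card (ssubset_iff_of_subset (fun d hd ↦ ?_) |>.2 ⟨e, ?_, ?_⟩)
  · obtain ⟨a, b, hab⟩ : ∃ a b, G.ends d = s(a, b) := Sym2.exists.1 ⟨_, rfl⟩
    rw [mem_filter, ends_contract hab, Sym2.mk_isDiag_iff] at hd
    rw [mem_filter, hab, Sym2.mk_isDiag_iff]
    exact ⟨mem_univ d, fun h ↦ hd.2 (by rw [h])⟩
  · simp [he, hu.symm]
  · simp [ends_contract he]

variable [Fintype V]

lemma HasDualCertificate.of_contract (h : (G.contract s u).HasDualCertificate s F X')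
    (hG : G.LoopsOnlyAt s) (hu : u ≠ s) (hru : u ∈ G.ends r) (hX' : ∀ d ∉ X, d ≠ r → d ∉ X')
    (hr : ∀ d ∉ X, G.ends d = s(s, u) → d = r)
    (hval : (G.contract s u).spokeValue s F X' ≤ G.spokeValue s F X) :
    G.HasDualCertificate s F X := by
  obtain ⟨x, p, hx, hxs, hp, hsum⟩ := h
  obtain ⟨p', hp'⟩ := hp.of_contract hG hu hx.nonneg hxs hru hX' hr
  exact ⟨x, p', hx, hxs, hp', hsum.trans (mod_cast hval)⟩

lemma HasDualCertificate.of_contract_of_add_two_le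
    (h : (G.contract s u).HasDualCertificate s F X') (hu : u ≠ s)
    (hX' : ∀ d ∉ X, u ∉ G.ends d → d ∉ X')
    (hval : (G.contract s u).spokeValue s F X' + 2 ≤ G.spokeValue s F X) :
    G.HasDualCertificate s F X := by
  obtain ⟨x, p, hx, hxs, hp, hsum⟩ := h
  obtain ⟨p', hp'⟩ := hp.of_contract_update hu hx.nonneg hX'
  refine ⟨_, p', fun v ↦ ?_, by simp [hu.symm, hxs], hp', ?_⟩
  · obtain rfl | hvu := eq_or_ne v u
    · simp
    · simpa [hvu] using hx v
  · have hupdate : ∑ v, Function.update x u 1 v ≤ ∑ v, x v + 1 := by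
      rw [sum_update_of_mem (mem_univ u), add_comm]
      gcongr
      exacts [fun v _ _ ↦ hx.nonneg v, subset_univ _]
    have : (((G.contract s u).spokeValue s F X' : ℤ) : ℝ) + 2 ≤ G.spokeValue s F X :=
      mod_cast hval
    linarith

variable [DecidableEq E]

/-- One of the three outcomes of an attempt to augment `F` relative to the reference set `X`. -/
def AugmentsOrCertifies (G : Multigraph V E) (s : V) (F : E → ℕ) (X : Finset E) : Prop :=
  G.HasDualCertificate s F X ∨ G.HasFlip s F X ∨ G.HasAlternatingCycle s F X

lemma AugmentsOrCertifies.congr (h : G.AugmentsOrCertifies s F' X)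
    (hF : ∀ e ∈ G.incident s, F' e = F e) : G.AugmentsOrCertifies s F X := by
  obtain ⟨x, p, hx, hxs, hp, hval⟩ | ⟨F₁, g, hF₁, hg, hg₁, hag⟩ |
    ⟨F₁, C, g₁, g₂, hF₁, hag, hg₁, hg₂, hC⟩ := h
  · exact .inl ⟨x, p, hx, hxs, hp, spokeValue_congr hF ▸ hval⟩
  · exact .inr (.inl ⟨F₁, g, hF₁, hg.congr hF, by rw [hg₁, hF g hg.1.mem_incident],
      fun e he hne ↦ (hag e he hne).trans (hF e he)⟩)
  · exact .inr (.inr ⟨F₁, C, g₁, g₂, hF₁, fun e he ↦ (hag e he).trans (hF e he), hg₁.congr hF,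
      hg₂.congr hF, hC⟩)

lemma IsContractible.augmentsOrCertifies (h : G.IsContractible s u F X X' e)
    (hcon : (G.contract s u).AugmentsOrCertifies s F X')
    (hcert : (G.contract s u).HasDualCertificate s F X' → G.HasDualCertificate s F X) :
    G.AugmentsOrCertifies s F X :=
  hcon.imp hcert fun h' ↦ h'.elim (fun hflip ↦ .inl (h.hasFlip hflip))
    h.hasFlip_or_hasAlternatingCycle

lemma augmentsOrCertifies_of_empty (hF : G.IsPrebasic s F) (hG : G.LoopsOnlyAt s) (hu : u ≠ s)
    (he : G.ends e = s(s, u)) (hact : G.IsActive s F X e)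
    (hhalf : levelCard F 1 (G.incident u) = 0) (hfull : levelCard F 2 (G.incident u) = 0)
    (hcon : (G.contract s u).AugmentsOrCertifies s F X) : G.AugmentsOrCertifies s F X := by
  have hzero (d) (hd : d ∈ G.incident u) : F d = 0 := by
    have := hF.le_two d
    have := levelCard_eq_zero.1 hhalf d hd
    have := levelCard_eq_zero.1 hfull d hd
    omega
  by_cases hpar : ∃ e' ∉ X, e' ≠ e ∧ G.ends e' = s(s, u)
  · obtain ⟨e', he'X, hne, he'⟩ := hpar
    have he'u := right_mem_incident he'
    exact .inr (.inr (hasAlternatingCycle_of_parallel hF hu he he' hact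
      ⟨isSpoke_iff.2 ⟨u, hu, he'⟩, .inl ⟨hzero e' he'u, he'X⟩⟩
      ⟨hne.symm, right_mem_incident he, he'u, hhalf, .inl hfull⟩))
  push Not at hpar
  have h : G.IsContractible s u F X X e :=
    ⟨hF, hu, he, hact, hhalf, fun _ _ ↦ .rfl, fun _ _ _ ↦ .inl hfull⟩
  refine h.augmentsOrCertifies hcon fun hcert ↦ hcert.of_contract (r := e) hG hu (by simp [he])
    (fun _ hd _ ↦ hd) (fun d hd hds ↦ by_contra fun hde ↦ hpar d hd hde hds) ?_
  rw [spokeValue_contract hu fun _ _ ↦ .rfl, add_le_iff_nonpos_right]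
  refine (sum_eq_zero fun d hd ↦ ?_).le
  simp [spokeTerm_of_ne_two, hzero d hd]

lemma augmentsOrCertifies_of_raise (hF : G.IsPrebasic s F) (hG : G.LoopsOnlyAt s) (hu : u ≠ s)
    (he : G.ends e = s(s, u)) (hact : G.IsActive s F X e) (hFe : F e = 0)
    (hhalf : levelCard F 1 (G.incident u) = 0) (hfull : levelCard F 2 (G.incident u) = 2)
    (hcon : (G.contract s u).AugmentsOrCertifies s F (X ∪ G.incident u)) :
    G.AugmentsOrCertifies s F X := by
  by_cases hpar : ∃ e' ∈ X, F e' = 2 ∧ G.ends e' = s(s, u)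
  · obtain ⟨e', he'X, hFe', he'⟩ := hpar
    have hne : e ≠ e' := fun h ↦ by simp [← h, hFe] at hFe'
    exact .inr (.inr (hasAlternatingCycle_of_parallel hF hu he he' hact
      ⟨isSpoke_iff.2 ⟨u, hu, he'⟩, .inr ⟨hFe', he'X⟩⟩
      ⟨hne, right_mem_incident he, right_mem_incident he', hhalf, .inr (.inr hFe')⟩))
  push Not at hpar
  have hX (d) (hd : d ∉ G.incident u) : d ∈ X ∪ G.incident u ↔ d ∈ X := by simp [hd]
  have h : G.IsContractible s u F X (X ∪ G.incident u) e :=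
    ⟨hF, hu, he, hact, hhalf, hX, fun g hg hgact ↦
      .inr (.inr (hgact.2.resolve_left fun h ↦ h.2 (mem_union_right X hg)).1)⟩
  refine h.augmentsOrCertifies hcon fun hcert ↦ hcert.of_contract_of_add_two_le hu
    (fun d hd hdu ↦ by simp [hd, mem_incident, hdu]) ?_
  have hdiff : ∀ d ∈ G.incident u, (G.contract s u).spokeTerm s F (X ∪ G.incident u) d -
      G.spokeTerm s F X d = if F d = 2 then -1 else 0 := by
    intro d hd
    split_ifs with hFd
    · exact spokeTerm_contract_sub_of_eq_two hG hu hd hFd (mem_union_right X hd)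
        fun hds hdX ↦ hpar d hdX hFd hds
    · simp [spokeTerm_of_ne_two hFd]
  rw [spokeValue_contract hu hX, sum_congr rfl hdiff, ← sum_filter, sum_const]
  change _ + levelCard F 2 (G.incident u) • (-1 : ℤ) + 2 ≤ _
  simp [hfull]

lemma augmentsOrCertifies_of_lower (hF : G.IsPrebasic s F) (hG : G.LoopsOnlyAt s) (hu : u ≠ s)
    (he : G.ends e = s(s, u)) (hFe : F e = 2) (heX : e ∈ X)
    (hhalf : levelCard F 1 (G.incident u) = 0) (hfull : levelCard F 2 (G.incident u) = 2)
    (hcon : ∀ p, (G.contract s u).AugmentsOrCertifies s F (insert p X)) :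
    G.AugmentsOrCertifies s F X := by
  have hact : G.IsActive s F X e := ⟨isSpoke_iff.2 ⟨u, hu, he⟩, .inr ⟨hFe, heX⟩⟩
  have heu := right_mem_incident he
  by_cases hpar : ∃ e' ≠ e, G.ends e' = s(s, u) ∧ G.IsActive s F X e'
  · obtain ⟨e', hne, he', hact'⟩ := hpar
    exact .inr (.inr (hasAlternatingCycle_of_parallel hF hu he he' hact hact'
      ⟨hne.symm, heu, right_mem_incident he', hhalf, .inr (.inl hFe)⟩))
  push Not at hpar
  obtain ⟨p, hp⟩ := exists_forall_iff_eq_of_levelCard_eq_two hfull heu hFe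
  obtain ⟨hpe, hpu, hFp⟩ := (hp p).2 rfl
  have hX (d) (hd : d ∉ G.incident u) : d ∈ insert p X ↔ d ∈ X := by
    simp [(ne_of_mem_of_not_mem hpu hd).symm]
  have h : G.IsContractible s u F X (insert p X) e :=
    ⟨hF, hu, he, hact, hhalf, hX, fun _ _ _ ↦ .inr (.inl hFe)⟩
  refine h.augmentsOrCertifies (hcon p) fun hcert ↦ hcert.of_contract (r := p) hG hu
    (mem_incident.1 hpu) (fun d hd hdp ↦ by simp [hd, hdp]) (fun d hd hds ↦ ?_) ?_
  · have hde : d ≠ e := fun hde ↦ hd (hde ▸ heX)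
    have hdu := right_mem_incident hds
    refine (hp d).1 ⟨hde, hdu, ?_⟩
    have := hF.le_two d
    have := levelCard_eq_zero.1 hhalf d hdu
    have : F d ≠ 0 := fun h0 ↦
      hpar d hde hds ⟨isSpoke_iff.2 ⟨u, hu, hds⟩, .inl ⟨h0, hd⟩⟩
    omega
  have hterm_p : (G.contract s u).spokeTerm s F (insert p X) p - G.spokeTerm s F X p = -1 :=
    spokeTerm_contract_sub_of_eq_two hG hu hpu hFp (mem_insert_self p X) fun hps hpX ↦
      hpar p hpe hps ⟨isSpoke_iff.2 ⟨u, hu, hps⟩, .inr ⟨hFp, hpX⟩⟩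
  rw [spokeValue_contract hu hX, sum_eq_add_of_mem e p heu hpu hpe.symm fun d hd hdep ↦ ?_,
    spokeTerm_contract_sub_of_mem hu he hFe heX, hterm_p]
  · simp
  · have hFd : F d ≠ 2 := fun hFd ↦ hdep.2 ((hp d).1 ⟨hdep.1, hd, hFd⟩)
    simp [spokeTerm_of_ne_two hFd]

lemma augmentsOrCertifies_of_roundsAt (hF : G.IsPrebasic s F) (hu : u ≠ s)
    (he : G.ends e = s(s, u)) (hact : G.IsActive s F X e) (h : G.RoundsAt s u F F')
    (hrec : G.IsPrebasic s F' → G.AugmentsOrCertifies s F' X) : G.AugmentsOrCertifies s F X := by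
  have hag (d) (hd : d ∈ G.incident s) : F' d = F d := h.eq_of_ne_one d (hF.ne_one d hd)
  by_cases hfull : levelCard F' 2 (G.incident u) = 1
  swap
  · exact (hrec (h.isPrebasic hF.ne_one hfull)).congr hag
  have hFe : F' e = 0 ∨ F' e = 2 := by
    have := h.le_two e
    have := hF.ne_one e (left_mem_incident he)
    have := hag e (left_mem_incident he)
    omega
  refine .inr (.inl ⟨Function.update F' e (2 - F e), e, ⟨update_le_two h.le_two (Nat.sub_le _ _),
    fun d hd ↦ ?_, fun v hv ↦ ?_⟩, hact, by simp, fun d hd hde ↦ ?_⟩)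
  · obtain rfl | hde := eq_or_ne d e
    · have := hag d hd
      simp only [Function.update_self]
      omega
    · simpa [hde, hag d hd] using hF.ne_one d hd
  · obtain rfl | hvu := eq_or_ne v u
    · have hev := right_mem_incident he
      have hone := levelCard_update_add F' (2 - F e) 1 hev
      have htwo := levelCard_update_add F' (2 - F e) 2 hev
      rw [h.half_eq_zero] at hone
      rw [hfull] at htwo
      rw [← hag e (left_mem_incident he)] at hone htwo ⊢
      unfold IsLocallyBasic
      obtain hFe | hFe := hFe <;> simp [hFe] at hone htwo ⊢ <;> omega
    · rw [isLocallyBasic_update_of_notMem (notMem_incident_of_ends he hv hvu)]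
      exact h.isLocallyBasic v hv hvu
  · rw [Function.update_of_ne hde, hag d hd]

theorem IsPrebasic.augmentsOrCertifies (hF : G.IsPrebasic s F) (hG : G.LoopsOnlyAt s)
    (X : Finset E) : G.AugmentsOrCertifies s F X := by
  induction hn : G.nonLoopCard + levelCard F 1 univ using Nat.strong_induction_on
    generalizing G F X with
  | _ n ih =>
  subst hn
  by_cases hex : ∃ e, G.IsActive s F X e
  swap
  · exact .inl (hF.hasDualCertificate (not_exists.1 hex))
  obtain ⟨e, hact⟩ := hex
  obtain ⟨u, hu, he⟩ := isSpoke_iff.1 hact.1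
  by_cases hhalf : levelCard F 1 (G.incident u) = 0
  swap
  · obtain ⟨F', hF'⟩ := hF.exists_roundsAt hG hu hhalf
    exact augmentsOrCertifies_of_roundsAt hF hu he hact hF' fun hpre ↦
      ih _ (Nat.add_lt_add_left hF'.halves_lt _) hpre hG X rfl
  have hcon (X') : (G.contract s u).AugmentsOrCertifies s F X' :=
    ih _ (Nat.add_lt_add_right (nonLoopCard_contract_lt hu he) _) (hF.contract hu hhalf)
      hG.contract X' rfl
  by_cases hfull : levelCard F 2 (G.incident u) = 0
  · exact augmentsOrCertifies_of_empty hF hG hu he hact hhalf hfull (hcon X)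
  have hfull : levelCard F 2 (G.incident u) = 2 := by
    have := hF.isLocallyBasic u hu
    unfold IsLocallyBasic at this
    omega
  obtain ⟨hFe, -⟩ | ⟨hFe, heX⟩ := hact.2
  · exact augmentsOrCertifies_of_raise hF hG hu he hact hFe hhalf hfull (hcon _)
  · exact augmentsOrCertifies_of_lower hF hG hu he hFe heX hhalf hfull fun _ ↦ hcon _

end Outcome

section CoverOfPotential

variable {V E : Type} {G : Multigraph V E} {s : V} {x : V → ℝ} {p : E → V → ℝ}

lemma IsPotential.isSCycleCover (h : G.IsPotential s ∅ x p) (hG : G.LoopFree)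
    (hx : ∀ v, 0 ≤ x v) (hxs : x s = 0) : G.IsSCycleCover s x := by
  refine ⟨hx, hxs, ?_⟩
  rintro ⟨len, hlen, verts, edges, hvalid⟩ ⟨hstart, hfinish, hinner, hturn, -⟩
  obtain ⟨n, rfl⟩ := Nat.exists_eq_add_one_of_ne_zero hlen.ne'
  change verts 0 = s at hstart
  change verts (Fin.last _) = s at hfinish
  let P : Fin (n + 2) → ℝ := Fin.cons 0 fun i ↦ p (edges i) (verts i.succ)
  have hP (i : Fin (n + 1)) : P i.succ = p (edges i) (verts i.succ) := rfl
  have hstep (i : Fin (n + 1)) : P i.succ ≤ P i.castSucc + x (verts i.succ) := by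
    cases i using Fin.cases with
    | zero =>
      have he : G.ends (edges 0) = s(s, verts (Fin.succ 0)) := hstart ▸ hvalid 0
      have hne : verts (Fin.succ 0) ≠ s := fun h0 ↦
        hG (edges 0) (by rw [he, h0, Sym2.mk_isDiag_iff])
      simpa [P] using h.le_of_start _ _ hne (by simp) he
    | succ i =>
      rw [Fin.castSucc_succ, hP, hP]
      exact h.le_add _ _ _ _ (hinner _ (Fin.succ_ne_zero _) (by simp [Fin.ext_iff]; omega))
        (hturn _ _ (by simp)) (by simp) (hvalid i.succ)
  have htelescope := (Fin.sum_univ_succ P).symm.trans (Fin.sum_univ_castSucc P)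
  have hlast : P (Fin.last _) = 1 := by
    rw [← Fin.succ_last, hP, Fin.succ_last, hfinish, h.source]
  have hsum := sum_le_sum fun i (_ : i ∈ univ) ↦ hstep i
  rw [sum_add_distrib] at hsum
  have hzero : P 0 = 0 := rfl
  calc (1 : ℝ) ≤ ∑ i, x (verts (Fin.succ i)) := by linarith
    _ = ∑ i, x (verts i) := by rw [Fin.sum_univ_succ fun i ↦ x (verts i), hstart, hxs, zero_add]

end CoverOfPotential

section PotentialOfCover

variable {V E : Type}

/-- A walk from `s` without U-turns and without interior visits to `s`, listed backwards as the
pairs of an edge and the vertex which the walk reaches through it. -/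
structure IsRootedTrail (G : Multigraph V E) (s : V) (l : List (E × V)) : Prop where
  chain : l.IsChain fun d d' ↦ d'.2 ≠ s ∧ d'.1 ≠ d.1 ∧ G.ends d.1 = s(d'.2, d.2)
  root : ∀ d ∈ l.getLast?, G.ends d.1 = s(s, d.2)

variable {G : Multigraph V E} {s v w : V} {e e' : E} {d : E × V} {l l' : List (E × V)} {x : V → ℝ}

lemma IsRootedTrail.singleton (he : G.ends e = s(s, v)) : G.IsRootedTrail s [(e, v)] :=
  ⟨.singleton _, by simpa⟩

lemma IsRootedTrail.cons (h : G.IsRootedTrail s ((e, v) :: l)) (hv : v ≠ s) (hne : e ≠ e')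
    (he' : G.ends e' = s(v, w)) : G.IsRootedTrail s ((e', w) :: (e, v) :: l) :=
  ⟨h.chain.cons_cons ⟨hv, hne, he'⟩, by simpa using h.root⟩

lemma IsRootedTrail.of_append (h : G.IsRootedTrail s (l ++ d :: l')) :
    G.IsRootedTrail s (d :: l') :=
  ⟨h.chain.right_of_append, by simpa [List.getLast?_append] using h.root⟩

/-- The weight of the vertices reached by a rooted trail. -/
def trailWeight (x : V → ℝ) (l : List (E × V)) : ℝ := (l.map fun d ↦ x d.2).sum

lemma trailWeight_cons : trailWeight x (d :: l) = x d.2 + trailWeight x l := by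
  simp [trailWeight]

lemma trailWeight_nonneg (hx : ∀ v, 0 ≤ x v) (l : List (E × V)) : 0 ≤ trailWeight x l :=
  List.sum_nonneg (List.forall_mem_map.2 fun d _ ↦ hx d.2)

lemma trailWeight_append : trailWeight x (l ++ l') = trailWeight x l + trailWeight x l' := by
  simp [trailWeight]

lemma IsRootedTrail.exists_nodup (hx : ∀ v, 0 ≤ x v) (h : G.IsRootedTrail s (d :: l)) :
    ∃ l', G.IsRootedTrail s (d :: l') ∧ (d :: l').Nodup ∧
      trailWeight x (d :: l') ≤ trailWeight x (d :: l) := by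
  induction l generalizing d with
  | nil => exact ⟨[], h, by simp, le_rfl⟩
  | cons d' l ih =>
    obtain ⟨l', hl', hnodup, hle⟩ := ih (h.of_append (l := [d]))
    rw [trailWeight_cons (d := d)]
    by_cases hd : d ∈ d' :: l'
    · obtain ⟨k, t, hkt⟩ := List.append_of_mem hd
      rw [hkt] at hl' hnodup hle
      rw [trailWeight_append] at hle
      exact ⟨t, hl'.of_append, hnodup.of_append_right,
        by linarith [hx d.2, trailWeight_nonneg hx k]⟩
    · obtain ⟨hne, hturn, hends⟩ := (List.isChain_cons_cons.1 h.chain).1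
      refine ⟨d' :: l', hl'.cons hne hturn hends, List.nodup_cons.2 ⟨hd, hnodup⟩, ?_⟩
      rw [trailWeight_cons]
      linarith

/-- The vertices of the walk which a rooted trail lists; the indices past the end of the list
stand for the root `s`. -/
def trailVertex (s : V) (l : List (E × V)) (i : ℕ) : V := (l[i]?.map Prod.snd).getD s

lemma IsRootedTrail.ends_getElem (h : G.IsRootedTrail s l) {i : ℕ} (hi : i < l.length) :
    G.ends l[i].1 = s(trailVertex s l i, trailVertex s l (i + 1)) := by
  obtain hi' | hi' : i + 1 < l.length ∨ l.length = i + 1 := by omega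
  · rw [(List.isChain_iff_getElem.1 h.chain i hi').2.2, Sym2.eq_swap]
    simp [trailVertex, hi, hi']
  · rw [h.root l[i] (by simp [List.getLast?_eq_getElem?, hi']), Sym2.eq_swap]
    simp [trailVertex, hi']

/-- The walk which a rooted trail lists, in the order of the list, that is, ending at the root. -/
def IsRootedTrail.toWalk (h : G.IsRootedTrail s l) (hl : l ≠ []) : G.Walk where
  len := l.length
  len_pos := List.length_pos_iff.2 hl
  verts i := trailVertex s l i
  edges i := l[i].1
  valid i := h.ends_getElem i.2

lemma IsRootedTrail.card_edges_toWalk_le_two (h : G.IsRootedTrail s l) (hl : l ≠ [])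
    (hnodup : l.Nodup) (e : E) : Nat.card {i // (h.toWalk hl).edges i = e} ≤ 2 := by
  classical
  have hmem (i : {i // (h.toWalk hl).edges i = e}) : trailVertex s l i.1 ∈ (G.ends e).toFinset := by
    obtain ⟨i, rfl⟩ := i
    rw [Sym2.mem_toFinset, (h.toWalk hl).valid]
    exact Sym2.mem_mk_left _ _
  have hinj : Function.Injective fun i ↦ (⟨_, hmem i⟩ : (G.ends e).toFinset) := by
    rintro ⟨⟨i, hi⟩, hie⟩ ⟨⟨j, hj⟩, hje⟩ hij
    change i < l.length at hi
    change j < l.length at hj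
    have hsnd : l[i].2 = l[j].2 := by simpa [trailVertex, hi, hj] using hij
    have hfst : l[i].1 = l[j].1 := hie.trans hje.symm
    exact Subtype.ext (Fin.ext (hnodup.getElem_inj_iff.1 (Prod.ext hfst hsnd)))
  calc Nat.card {i // (h.toWalk hl).edges i = e}
      ≤ Nat.card (G.ends e).toFinset := Nat.card_le_card_of_injective _ hinj
    _ ≤ 2 := by
      rw [Nat.card_eq_fintype_card, Fintype.card_coe, Sym2.card_toFinset]
      split_ifs <;> simp

lemma IsRootedTrail.isSCycle_toWalk (h : G.IsRootedTrail s ((e, s) :: l))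
    (hnodup : ((e, s) :: l).Nodup) : (h.toWalk (by simp)).IsSCycle s := by
  have hchain := List.isChain_iff_getElem.1 h.chain
  refine ⟨rfl, ?_, fun i hi hi' ↦ ?_, ?_, h.card_edges_toWalk_le_two _ hnodup⟩
  · simp [Walk.finish, toWalk, trailVertex]
  · obtain ⟨j, hj⟩ := Nat.exists_eq_add_one_of_ne_zero (Fin.val_ne_of_ne hi)
    have hj' : j < l.length := by
      have := Fin.val_lt_last hi'
      simp only [toWalk, List.length_cons] at this
      omega
    have hne : l[j].2 ≠ s := (hchain j (by simpa)).1
    simpa [toWalk, trailVertex, hj, hj'] using hne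
  · rintro ⟨i, hi⟩ ⟨_, hj⟩ rfl
    exact (hchain i hj).2.1.symm

lemma IsRootedTrail.sum_toWalk (h : G.IsRootedTrail s l) (hl : l ≠ []) (hxs : x s = 0) :
    ∑ i, x ((h.toWalk hl).verts i) = trailWeight x l := by
  change ∑ i : Fin (l.length + 1), x (trailVertex s l i) = _
  rw [Fin.sum_univ_castSucc, trailWeight, ← Fin.sum_univ_fun_getElem]
  simp [trailVertex, hxs]

lemma IsSCycleCover.one_le_trailWeight (hx : G.IsSCycleCover s x)
    (h : G.IsRootedTrail s ((e, s) :: l)) : 1 ≤ trailWeight x ((e, s) :: l) := by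
  obtain ⟨l', hl', hnodup, hle⟩ := h.exists_nodup hx.1
  refine le_trans ?_ hle
  rw [← hl'.sum_toWalk (by simp) hx.2.1]
  exact hx.2.2 _ (hl'.isSCycle_toWalk hnodup)

/-- The weights of the rooted trails which reach `v` through `e`, together with `1`. -/
def trailWeights (G : Multigraph V E) (s : V) (x : V → ℝ) (e : E) (v : V) : Set ℝ :=
  insert 1 {c | ∃ l, G.IsRootedTrail s ((e, v) :: l) ∧ trailWeight x ((e, v) :: l) = c}

lemma IsSCycleCover.exists_isPotential (h : G.IsSCycleCover s x) :
    ∃ p, G.IsPotential s ∅ x p := by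
  have hnonneg (e v) : ∀ c ∈ G.trailWeights s x e v, 0 ≤ c := by
    rintro c (rfl | ⟨l, -, rfl⟩)
    exacts [zero_le_one, trailWeight_nonneg h.1 _]
  have hne (e v) : (G.trailWeights s x e v).Nonempty := ⟨1, .inl rfl⟩
  have hle {e v c} (hc : c ∈ G.trailWeights s x e v) : sInf (G.trailWeights s x e v) ≤ c :=
    csInf_le ⟨0, hnonneg e v⟩ hc
  refine ⟨fun e v ↦ sInf (G.trailWeights s x e v), ?_, fun _ _ ↦ hle (.inl rfl), fun e ↦ ?_,
    fun e v _ _ he ↦ ?_, fun e e' v w hv hee' _ he' ↦ ?_⟩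
  · exact fun e v ↦ le_csInf (hne e v) (hnonneg e v)
  · refine (hle (.inl rfl)).antisymm (le_csInf (hne e s) ?_)
    rintro c (rfl | ⟨l, hl, rfl⟩)
    exacts [le_rfl, h.one_le_trailWeight hl]
  · exact hle (.inr ⟨[], .singleton he, by simp [trailWeight]⟩)
  · rw [← sub_le_iff_le_add]
    refine le_csInf (hne e v) ?_
    rintro c (rfl | ⟨l, hl, rfl⟩)
    · exact (sub_le_self _ (h.1 w)).trans (hle (.inl rfl))
    · rw [sub_le_iff_le_add']
      exact hle (.inr ⟨_, hl.cons hv hee' he', trailWeight_cons⟩)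

end PotentialOfCover

section WeakDuality

variable {V E : Type} [DecidableEq V] {G : Multigraph V E} {s : V} {x : V → ℝ} {p : E → V → ℝ}
  {F : E → ℕ}

/-- The slack of the arrivals at the ends of an edge, summed over its two ends. -/
noncomputable def arrivalSlack (G : Multigraph V E) (x : V → ℝ) (p : E → V → ℝ) (e : E) : ℝ :=
  ∑ v ∈ (G.ends e).toFinset, (p e v - x v)

lemma arrivalSlack_of_ends (hG : G.LoopFree) {e : E} {v w : V} (he : G.ends e = s(v, w)) :
    G.arrivalSlack x p e = p e v - x v + (p e w - x w) := by
  have hvw : v ≠ w := fun h ↦ hG e (by simp [he, h])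
  rw [arrivalSlack, he, Sym2.toFinset_mk_eq, sum_pair hvw]

lemma IsPotential.indicator_le_sum (h : G.IsPotential s ∅ x p) (hG : G.LoopFree) (hxs : x s = 0)
    (e : E) : (if s ∈ G.ends e then 1 else 0) ≤ ∑ v ∈ (G.ends e).toFinset.erase s,
      (G.arrivalSlack x p e - (p e v - x v) - p e v + x v) := by
  by_cases hes : s ∈ G.ends e
  · obtain ⟨w, he⟩ := Sym2.mem_iff_exists.1 hes
    have hws : w ≠ s := fun h0 ↦ hG e (by rw [he, h0, Sym2.mk_isDiag_iff])
    have hle := h.le_of_start e w hws (by simp) he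
    rw [if_pos hes, arrivalSlack_of_ends hG he, he, Sym2.toFinset_mk_eq,
      erase_insert (by simpa using hws.symm), sum_singleton, h.source, hxs]
    linarith
  · obtain ⟨⟨v, w⟩, he⟩ := Quot.exists_rep (G.ends e)
    replace he : G.ends e = s(v, w) := he.symm
    rw [if_neg hes, erase_eq_of_notMem (by rwa [Sym2.mem_toFinset]),
      arrivalSlack_of_ends hG he, he, Sym2.toFinset_mk_eq,
      sum_pair fun h0 ↦ hG e (by rw [he, h0, Sym2.mk_isDiag_iff])]
    linarith

variable [Fintype E]

lemma IsPotential.sum_le_sum_of_isLocallyBasic (h : G.IsPotential s ∅ x p) (hG : G.LoopFree)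
    (hF : G.IsPrebasic s F) {v : V} (hv : v ≠ s) :
    ∑ e ∈ G.incident v, (F e : ℝ) * (G.arrivalSlack x p e - (p e v - x v)) ≤
      ∑ e ∈ G.incident v, (F e : ℝ) * p e v := by
  refine (hF.isLocallyBasic v hv).sum_mul_le_sum_mul (fun e _ ↦ hF.le_two e)
    fun e he e' _ hne ↦ ?_
  obtain ⟨w, hw⟩ := Sym2.mem_iff_exists.1 (mem_incident.1 he)
  rw [arrivalSlack_of_ends hG hw]
  linarith [h.le_add e' e v w hv hne.symm (by simp) hw]

variable [Fintype V]

lemma sum_mul_sum_erase (G : Multigraph V E) (s : V) (F : E → ℝ) (g : E → V → ℝ) :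
    ∑ e, F e * ∑ v ∈ (G.ends e).toFinset.erase s, g e v =
      ∑ v with v ≠ s, ∑ e ∈ G.incident v, F e * g e v := by
  simp_rw [mul_sum]
  exact sum_comm' (by simp [mem_incident, and_comm])

theorem IsPotential.sum_incident_le (h : G.IsPotential s ∅ x p) (hG : G.LoopFree)
    (hx : ∀ v, 0 ≤ x v) (hxs : x s = 0) (hF : G.IsPrebasic s F) :
    ∑ e ∈ G.incident s, (F e : ℝ) ≤ 4 * ∑ v, x v := by
  calc ∑ e ∈ G.incident s, (F e : ℝ)
    _ = ∑ e, (F e : ℝ) * (if s ∈ G.ends e then 1 else 0) := by simp [incident, sum_filter]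
    _ ≤ ∑ e, (F e : ℝ) * ∑ v ∈ (G.ends e).toFinset.erase s,
          (G.arrivalSlack x p e - (p e v - x v) - p e v + x v) := by
      gcongr with e
      exact h.indicator_le_sum hG hxs e
    _ = ∑ v with v ≠ s, ∑ e ∈ G.incident v,
          (F e : ℝ) * (G.arrivalSlack x p e - (p e v - x v) - p e v + x v) :=
      G.sum_mul_sum_erase s _ _
    _ ≤ ∑ v with v ≠ s, 4 * x v := by
      refine sum_le_sum fun v hv ↦ ?_
      have hv := (mem_filter.1 hv).2
      have hflow := h.sum_le_sum_of_isLocallyBasic hG hF hv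
      have hfour : ∑ e ∈ G.incident v, (F e : ℝ) ≤ 4 := mod_cast
        (hF.isLocallyBasic v hv).sum_le_four fun e _ ↦ hF.le_two e
      have hcap := mul_le_mul_of_nonneg_right hfour (hx v)
      simp_rw [mul_add, mul_sub _ _ (p _ v), sum_add_distrib, sum_sub_distrib, ← sum_mul]
      linarith
    _ ≤ 4 * ∑ v, x v := by
      rw [mul_sum]
      exact sum_le_univ_sum_of_nonneg fun v ↦ mul_nonneg zero_le_four (hx v)

theorem IsSCycleCover.sum_incident_le (hx : G.IsSCycleCover s x) (hG : G.LoopFree)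
    (hF : G.IsPrebasic s F) : ∑ e ∈ G.incident s, (F e : ℝ) ≤ 4 * ∑ v, x v := by
  obtain ⟨p, hp⟩ := hx.exists_isPotential
  exact hp.sum_incident_le hG hx.1 hx.2.1 hF

end WeakDuality

section Translation

variable {V E : Type} {G : Multigraph V E} {s v : V} {f : E → ℝ} {F : E → ℕ}

lemma LoopFree.loopsOnlyAt (hG : G.LoopFree) : G.LoopsOnlyAt s :=
  fun e _ he ↦ (hG e (he ▸ Sym2.diag_isDiag _)).elim

/-- The packing with doubled values `F`. -/
noncomputable def ofLevels (F : E → ℕ) (e : E) : ℝ := F e / 2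

lemma ofLevels_eq_zero {e : E} : ofLevels F e = 0 ↔ F e = 0 := by simp [ofLevels]

lemma ofLevels_eq_half {e : E} : ofLevels F e = 1 / 2 ↔ F e = 1 := by
  rw [ofLevels, div_left_inj' two_ne_zero, Nat.cast_eq_one]

lemma ofLevels_eq_one {e : E} : ofLevels F e = 1 ↔ F e = 2 := by
  rw [ofLevels, div_eq_one_iff_eq two_ne_zero]
  norm_cast

variable [DecidableEq V] [Fintype E]

lemma cnt1_ofLevels : G.cnt1 (ofLevels F) v = levelCard F 2 (G.incident v) :=
  Nat.subtype_card _ fun e ↦ by simp [mem_incident, ofLevels_eq_one]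

lemma cntH_ofLevels : G.cntH (ofLevels F) v = levelCard F 1 (G.incident v) :=
  Nat.subtype_card _ fun e ↦ by rw [mem_filter, mem_incident, ofLevels_eq_half]

lemma isTypeO_ofLevels_iff (hF : ∀ e, F e ≤ 2) : G.IsTypeO (ofLevels F) v ↔
    levelCard F 2 (G.incident v) = 0 ∧ levelCard F 1 (G.incident v) = 0 := by
  simp only [IsTypeO, ofLevels_eq_zero, levelCard_eq_zero, mem_incident, ← forall_and]
  exact forall_congr' fun e ↦ by have := hF e; grind

lemma isLocallyBasic_incident_iff (hF : ∀ e, F e ≤ 2) : IsLocallyBasic F (G.incident v) ↔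
    G.IsTypeO (ofLevels F) v ∨ G.IsTypeI (ofLevels F) v ∨ G.IsTypeH (ofLevels F) v ∨
      G.IsTypeT (ofLevels F) v := by
  rw [isTypeO_ofLevels_iff hF, IsTypeI, IsTypeH, IsTypeT, cnt1_ofLevels, cntH_ofLevels,
    IsLocallyBasic]

lemma basicSize_ofLevels :
    G.basicSize s (ofLevels F) = 1 / 4 * ∑ e ∈ G.incident s, (F e : ℝ) := by
  simp only [basicSize, incident, sum_filter, mul_sum, Set.indicator_apply, Set.mem_ofPred_eq,
    ofLevels]
  refine sum_congr rfl fun e _ ↦ ?_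
  split_ifs <;> ring

lemma IsBasicSCyclePacking.exists_isPrebasic (hf : G.IsBasicSCyclePacking s f) :
    ∃ F, G.IsPrebasic s F ∧ f = ofLevels F := by
  obtain ⟨hvalues, hs, htypes, -⟩ := hf
  have hlevel (e) : ∃ k : ℕ, k ≤ 2 ∧ f e = k / 2 := by
    obtain h | h | h := hvalues e
    exacts [⟨0, by simp [h]⟩, ⟨1, by simp [h]⟩, ⟨2, by simp [h]⟩]
  choose F hF2 hF using hlevel
  obtain rfl : f = ofLevels F := funext hF
  refine ⟨F, ⟨hF2, fun e he h1 ↦ ?_, fun v hv ↦ (isLocallyBasic_incident_iff hF2).2 (htypes v hv)⟩,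
    rfl⟩
  have := hs e (mem_incident.1 he)
  rw [ofLevels_eq_zero, ofLevels_eq_one] at this
  omega

lemma IsPrebasic.basicSize_eq (hF : G.IsPrebasic s F) :
    G.basicSize s (ofLevels F) = levelCard F 2 (G.incident s) / 2 := by
  rw [basicSize_ofLevels, ← Nat.cast_sum, sum_eq_levelCard fun e _ ↦ hF.le_two e,
    levelCard_eq_zero.2 hF.ne_one]
  push_cast
  ring

lemma IsSCycleCover.basicSize_le [Fintype V] {x : V → ℝ} (hx : G.IsSCycleCover s x)
    (hG : G.LoopFree) (hF : G.IsPrebasic s F) : G.basicSize s (ofLevels F) ≤ ∑ v, x v := by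
  rw [basicSize_ofLevels]
  linarith [hx.sum_incident_le hG hF]

end Translation

section Optimal

variable {V E : Type} {G : Multigraph V E} {s : V} {F : E → ℕ}

lemma IsActive.eq_zero {g : E} (hg : G.IsActive s F ∅ g) : F g = 0 := by simpa using hg.2

variable [DecidableEq V] [Fintype E]

/-- Among the packings of maximum size, `F` has the fewest edges of value `1/2`. -/
structure IsOptimal (G : Multigraph V E) (s : V) (F : E → ℕ) : Prop where
  isPrebasic : G.IsPrebasic s F
  full_le : ∀ F', G.IsPrebasic s F' →
    levelCard F' 2 (G.incident s) ≤ levelCard F 2 (G.incident s)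
  halves_le : ∀ F', G.IsPrebasic s F' →
    levelCard F' 2 (G.incident s) = levelCard F 2 (G.incident s) →
      levelCard F 1 univ ≤ levelCard F' 1 univ

lemma isPrebasic_zero : G.IsPrebasic s 0 where
  le_two := by simp
  ne_one := by simp
  isLocallyBasic v _ := .inl (by simp [levelCard])

lemma exists_isOptimal (G : Multigraph V E) (s : V) : ∃ F, G.IsOptimal s F := by
  have hle (F : E → ℕ) : levelCard F 2 (G.incident s) ≤ Fintype.card E := card_le_univ _
  obtain ⟨F, hF, hmin⟩ := exists_minimalFor_of_wellFoundedLT (G.IsPrebasic s)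
    (fun F ↦ toLex (Fintype.card E - levelCard F 2 (G.incident s), levelCard F 1 univ))
    ⟨0, isPrebasic_zero⟩
  have hmin' (F') (hF' : G.IsPrebasic s F') := (le_total _ _).elim id (hmin hF')
  simp only [Prod.Lex.toLex_le_toLex] at hmin'
  refine ⟨F, hF, fun F' hF' ↦ ?_, fun F' hF' heq ↦ ?_⟩
  all_goals
    have := hmin' F' hF'
    have := hle F
    have := hle F'
    omega

lemma spokeValue_empty_le : G.spokeValue s F ∅ ≤ levelCard F 2 (G.incident s) := by
  rw [spokeValue, levelCard, incident, filter_filter, card_filter, Nat.cast_sum]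
  refine sum_le_sum fun e _ ↦ ?_
  by_cases h : G.IsSpoke s e ∧ F e = 2
  · simp [spokeTerm, h, h.1.1]
  · simp only [spokeTerm, if_neg h]
    positivity

lemma IsOptimal.not_hasFlip (hF : G.IsOptimal s F) : ¬ G.HasFlip s F ∅ := by
  rintro ⟨F', g, hF', hg, hFg, heq⟩
  rw [hg.eq_zero] at hFg
  refine (hF.full_le F' hF').not_gt (levelCard_lt_levelCard (fun e he h2 ↦ ?_) hg.1.mem_incident
    (by simp [hg.eq_zero]) hFg)
  rwa [heq e he (by rintro rfl; simp [hg.eq_zero] at h2)]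

section DecidableEdges

variable [DecidableEq E]

lemma IsAlternatingCycle.isPrebasic_flip {C : Finset E} {g₁ g₂ : E}
    (h : G.IsAlternatingCycle s F C g₁ g₂) (hF : G.IsPrebasic s F) :
    G.IsPrebasic s fun e ↦ if e ∈ C then 2 - F e else F e where
  le_two e := by
    have := hF.le_two e
    split_ifs <;> omega
  ne_one e he := by
    have := hF.ne_one e he
    split_ifs <;> omega
  isLocallyBasic v hv := by
    obtain hv0 | ⟨a, b, hab, hCab⟩ := h.inter_incident v hv
    · refine (isLocallyBasic_congr fun e he ↦ if_neg fun heC ↦ ?_).2 (hF.isLocallyBasic v hv)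
      simpa [hv0] using mem_inter.2 ⟨heC, he⟩
    · have hmem (e) : e ∈ C ∧ e ∈ G.incident v ↔ e = a ∨ e = b := by
        simpa using Finset.ext_iff.1 hCab e
      refine hab.isLocallyBasic_of_eq_two_sub (fun e _ ↦ hF.le_two e) (hF.isLocallyBasic v hv)
        (fun e he ↦ if_neg fun heC ↦ ?_) (if_pos ((hmem a).2 (.inl rfl)).1)
        (if_pos ((hmem b).2 (.inr rfl)).1)
      obtain ⟨hev, hne⟩ := mem_sdiff.1 he
      exact hne (by simpa using (hmem e).1 ⟨heC, hev⟩)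

lemma IsOptimal.not_hasAlternatingCycle (hF : G.IsOptimal s F) :
    ¬ G.HasAlternatingCycle s F ∅ := by
  rintro ⟨F', C, g₁, g₂, hF', heq, hg₁, hg₂, hC⟩
  refine (hF.full_le _ (hC.isPrebasic_flip hF')).not_gt (levelCard_lt_levelCard (fun e he h2 ↦ ?_)
    hg₁.1.mem_incident (by simp [hg₁.eq_zero]) ?_)
  · rw [if_neg, heq e he, h2]
    rw [hC.mem_iff e he]
    rintro (rfl | rfl)
    · simp [hg₁.eq_zero] at h2
    · simp [hg₂.eq_zero] at h2
  · rw [if_pos ((hC.mem_iff g₁ hg₁.1.mem_incident).2 (.inl rfl)), heq g₁ hg₁.1.mem_incident,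
      hg₁.eq_zero]

end DecidableEdges

lemma IsOptimal.hasDualCertificate [Fintype V] (hF : G.IsOptimal s F) (hG : G.LoopsOnlyAt s) :
    G.HasDualCertificate s F ∅ := by
  classical
  exact (hF.isPrebasic.augmentsOrCertifies hG ∅).resolve_right fun h ↦
    h.elim hF.not_hasFlip hF.not_hasAlternatingCycle

end Optimal

section Parity

variable {V E : Type} {G : Multigraph V E} {s : V} {F F' : E → ℕ} {n : ℕ} [NeZero n]
  {w : Fin n → V} {c : Fin n → E} {i : Fin n} {e : E}

/-- A cycle of edges of value `1/2`. Indices are cyclic: `c i` joins `w i` to `w (i + 1)`, with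
`i + 1` computed modulo `n`. -/
structure IsHalfCycle (G : Multigraph V E) (F : E → ℕ) (w : Fin n → V) (c : Fin n → E) : Prop where
  vertex_injective : Function.Injective w
  edge_injective : Function.Injective c
  ends_eq : ∀ i, G.ends (c i) = s(w i, w (i + 1))
  eq_one : ∀ i, F (c i) = 1

lemma Walk.IsCycle.verts_succ {W : G.Walk} [NeZero W.len] (hW : W.IsCycle) (i : Fin W.len) :
    W.verts i.succ = W.verts (i + 1).castSucc := by
  obtain ⟨_ | m, _, verts, edges, _⟩ := W
  · exact i.elim0
  cases i using Fin.lastCases with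
  | last =>
    rw [Fin.last_add_one, Fin.succ_last]
    exact hW.1.symm
  | cast i => rw [Fin.coeSucc_eq_succ, Fin.succ_castSucc]

lemma Walk.IsCycle.isHalfCycle {W : G.Walk} [NeZero W.len] (hW : W.IsCycle)
    (hF : ∀ i, F (W.edges i) = 1) :
    G.IsHalfCycle F (fun i ↦ W.verts i.castSucc) W.edges where
  vertex_injective := hW.2.2
  edge_injective := hW.2.1
  ends_eq i := by rw [W.valid, hW.verts_succ]
  eq_one := hF

namespace IsHalfCycle

lemma add_one_ne (h : G.IsHalfCycle F w c) (hG : G.LoopFree) : i + 1 ≠ i := fun hi ↦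
  hG (c i) (by rw [h.ends_eq, hi]; exact Sym2.diag_isDiag _)

variable [DecidableEq V] [Fintype E]

lemma edge_mem_incident (h : G.IsHalfCycle F w c) : c i ∈ G.incident (w i) :=
  left_mem_incident (h.ends_eq i)

lemma edge_mem_incident_add_one (h : G.IsHalfCycle F w c) : c i ∈ G.incident (w (i + 1)) :=
  right_mem_incident (h.ends_eq i)

lemma vertex_ne (h : G.IsHalfCycle F w c) (hF : G.IsPrebasic s F) : w i ≠ s := fun hi ↦
  hF.ne_one (c i) (hi ▸ h.edge_mem_incident) (h.eq_one i)

lemma levelCard_eq (h : G.IsHalfCycle F w c) (hF : G.IsPrebasic s F) (i : Fin n) :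
    levelCard F 1 (G.incident (w i)) = 2 ∧ levelCard F 2 (G.incident (w i)) ≤ 1 := by
  have hne : levelCard F 1 (G.incident (w i)) ≠ 0 := fun h0 ↦
    levelCard_eq_zero.1 h0 (c i) h.edge_mem_incident (h.eq_one i)
  have := hF.isLocallyBasic (w i) (h.vertex_ne hF)
  unfold IsLocallyBasic at this
  omega

lemma exists_eq_of_mem_incident (h : G.IsHalfCycle F w c) (hG : G.LoopFree)
    (hF : G.IsPrebasic s F) (he : e ∈ G.incident (w i)) (heF : F e = 1) : ∃ j, e = c j := by
  obtain ⟨k, rfl⟩ : ∃ k, k + 1 = i := ⟨i - 1, sub_add_cancel i 1⟩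
  obtain ⟨p, hp⟩ := exists_forall_iff_eq_of_levelCard_eq_two (h.levelCard_eq hF (k + 1)).1
    h.edge_mem_incident (h.eq_one _)
  have hkp : c k = p := (hp (c k)).1
    ⟨h.edge_injective.ne (h.add_one_ne hG).symm, h.edge_mem_incident_add_one, h.eq_one k⟩
  by_cases hek : e = c (k + 1)
  · exact ⟨k + 1, hek⟩
  · exact ⟨k, ((hp e).1 ⟨hek, he, heF⟩).trans hkp.symm⟩

lemma even_card_ends (h : G.IsHalfCycle F w c) (hG : G.LoopFree) (hF : G.IsPrebasic s F)
    (he : F e = 1) : Even #{i | w i ∈ G.ends e} := by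
  by_cases hends : ∃ i, w i ∈ G.ends e
  · obtain ⟨i, hi⟩ := hends
    obtain ⟨j, rfl⟩ := h.exists_eq_of_mem_incident hG hF (mem_incident.2 hi) he
    have hpair : ({i | w i ∈ G.ends (c j)} : Finset (Fin n)) = {j, j + 1} := by
      ext i
      simp [h.ends_eq j, h.vertex_injective.eq_iff]
    rw [hpair, card_pair (h.add_one_ne hG).symm]
    exact even_two
  · simp [not_exists.1 hends]

lemma even_sum_card_incident (h : G.IsHalfCycle F w c) (hG : G.LoopFree) (hF : G.IsPrebasic s F)
    (F' : E → ℕ) : Even (∑ i, #{e ∈ G.incident (w i) | F e = 1 ∧ F' e = 2}) := by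
  have hdouble : ∑ i, #{e ∈ G.incident (w i) | F e = 1 ∧ F' e = 2} =
      ∑ e with F e = 1 ∧ F' e = 2, #{i | w i ∈ G.ends e} := by
    simp_rw [incident, filter_filter, and_comm (b := F _ = 1 ∧ F' _ = 2), ← filter_filter]
    exact sum_card_bipartiteAbove_eq_sum_card_bipartiteBelow _
  rw [hdouble]
  exact even_sum _ fun e he ↦ h.even_card_ends hG hF (mem_filter.1 he).2.1

end IsHalfCycle

variable [DecidableEq V] [Fintype E]

lemma RoundsAt.levelCard_full_eq {u : V} {S : Finset E} (h : G.RoundsAt s u F F') :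
    levelCard F' 2 S = levelCard F 2 S + #{e ∈ S | F e = 1 ∧ F' e = 2} := by
  simp_rw [levelCard, card_filter, ← sum_add_distrib]
  refine sum_congr rfl fun e _ ↦ ?_
  by_cases he : F e = 1
  · simp [he]
  · simp [he, h.eq_of_ne_one e he]

lemma RoundsAt.levelCard_half_lt {u : V} {S : Finset E} (h : G.RoundsAt s u F F') (heS : e ∈ S)
    (he : F e = 1) (he' : F' e ≠ 1) : levelCard F' 1 S < levelCard F 1 S :=
  levelCard_lt_levelCard (fun d _ hd ↦ by_contra fun hne ↦ hne (h.eq_of_ne_one d hne ▸ hd)) heS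
    he' he

lemma IsOptimal.levelCard_full_eq_one {u : V} (hF : G.IsOptimal s F) (h : G.RoundsAt s u F F') :
    levelCard F' 2 (G.incident u) = 1 := by
  by_contra hne
  have hs := hF.isPrebasic.ne_one
  exact (hF.halves_le F' (h.isPrebasic hs hne)
    (levelCard_congr fun e he ↦ h.eq_of_ne_one e (hs e he))).not_gt h.halves_lt

namespace IsHalfCycle

lemma levelCard_half_eq_zero (h : G.IsHalfCycle F w c) (hF : G.IsPrebasic s F)
    (hF' : G.RoundsAt s (w 0) F F') (i : Fin n) : levelCard F' 1 (G.incident (w i)) = 0 := by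
  obtain _ | m := n
  · exact i.elim0
  induction i using Fin.induction with
  | zero => exact hF'.half_eq_zero
  | succ i ih =>
    rw [← Fin.coeSucc_eq_succ]
    have hlt := hF'.levelCard_half_lt h.edge_mem_incident_add_one (h.eq_one _)
      (levelCard_eq_zero.1 ih _ h.edge_mem_incident)
    have hne : w (i.castSucc + 1) ≠ w 0 :=
      h.vertex_injective.ne (by rw [Fin.coeSucc_eq_succ]; exact i.succ_ne_zero)
    have := hF'.isLocallyBasic _ (h.vertex_ne hF) hne
    have := (h.levelCard_eq hF (i.castSucc + 1)).1
    unfold IsLocallyBasic at *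
    omega

lemma odd_sum_levelCard (h : G.IsHalfCycle F w c) (hG : G.LoopFree) (hF : G.IsOptimal s F) :
    Odd (∑ i, levelCard F 2 (G.incident (w i))) := by
  have hFp := hF.isPrebasic
  obtain ⟨F', hF'⟩ := hFp.exists_roundsAt hG.loopsOnlyAt (h.vertex_ne hFp (i := 0))
    (by simp [(h.levelCard_eq hFp 0).1])
  have hothers : Even (∑ i ∈ univ.erase 0, levelCard F' 2 (G.incident (w i))) := by
    refine even_sum _ fun i hi ↦ ?_
    have hzero := h.levelCard_half_eq_zero hFp hF' i
    have := hF'.isLocallyBasic _ (h.vertex_ne hFp) (h.vertex_injective.ne (ne_of_mem_erase hi))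
    unfold IsLocallyBasic at this
    rw [Nat.even_iff]
    omega
  have hodd : Odd (∑ i, levelCard F' 2 (G.incident (w i))) := by
    rw [← add_sum_erase univ _ (mem_univ 0), hF.levelCard_full_eq_one hF']
    exact odd_one.add_even hothers
  simp only [hF'.levelCard_full_eq, sum_add_distrib] at hodd
  exact (Nat.odd_add.1 hodd).2 (h.even_sum_card_incident hG hFp F')

lemma odd_card_isTypeT (h : G.IsHalfCycle F w c) (hG : G.LoopFree) (hF : G.IsOptimal s F) :
    Odd (Nat.card {i // G.IsTypeT (ofLevels F) (w i)}) := by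
  classical
  have hcard : Nat.card {i // G.IsTypeT (ofLevels F) (w i)} =
      ∑ i, levelCard F 2 (G.incident (w i)) := by
    rw [Nat.card_eq_fintype_card, Fintype.card_subtype, card_filter]
    refine sum_congr rfl fun i _ ↦ ?_
    have := h.levelCard_eq hF.isPrebasic i
    rw [IsTypeT, cnt1_ofLevels, cntH_ofLevels]
    split_ifs <;> omega
  exact hcard ▸ h.odd_sum_levelCard hG hF

end IsHalfCycle

lemma IsOptimal.isBasicSCyclePacking (hF : G.IsOptimal s F) (hG : G.LoopFree) :
    G.IsBasicSCyclePacking s (ofLevels F) := by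
  have hFp := hF.isPrebasic
  simp only [IsBasicSCyclePacking, ofLevels_eq_zero, ofLevels_eq_half, ofLevels_eq_one]
  refine ⟨fun e ↦ ?_, fun e he ↦ ?_,
    fun v hv ↦ (isLocallyBasic_incident_iff hFp.le_two).1 (hFp.isLocallyBasic v hv),
    fun W hW hhalf ↦ ?_⟩
  · have := hFp.le_two e
    omega
  · have := hFp.le_two e
    have := hFp.ne_one e (mem_incident.2 he)
    omega
  · have : NeZero W.len := ⟨W.len_pos.ne'⟩
    exact (hW.isHalfCycle hhalf).odd_card_isTypeT hG hF

end Parity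

end Multigraph

/-- the maximum size of a basic `s`-cycle packing equals the
minimum size of an `s`-cycle cover, witnessed by a maximum basic packing `f`
and a half-integral minimum cover `x` of equal size. -/
theorem stmt13_max_basic_eq_min_cover {V E : Type} [Fintype V] [Fintype E]
    (G : Multigraph V E) (hloop : G.LoopFree) (s : V) :
    ∃ (f : E → ℝ) (x : V → ℝ),
      G.IsBasicSCyclePacking s f ∧ G.IsSCycleCover s x ∧ Multigraph.HalfIntegral x ∧
      G.basicSize s f = ∑ v, x v ∧
      (∀ f' : E → ℝ, G.IsBasicSCyclePacking s f' → G.basicSize s f' ≤ G.basicSize s f) ∧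
      (∀ x' : V → ℝ, G.IsSCycleCover s x' → ∑ v, x v ≤ ∑ v, x' v) := by
  classical
  obtain ⟨F, hF⟩ := Multigraph.exists_isOptimal G s
  obtain ⟨x, p, hx, hxs, hp, hle⟩ := hF.hasDualCertificate hloop.loopsOnlyAt
  have hcover : G.IsSCycleCover s x := hp.isSCycleCover hloop hx.nonneg hxs
  have hsize : G.basicSize s (Multigraph.ofLevels F) = ∑ v, x v := by
    refine (hcover.basicSize_le hloop hF.isPrebasic).antisymm ?_
    have hspokes : (G.spokeValue s F ∅ : ℝ) ≤ Multigraph.levelCard F 2 (G.incident s) :=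
      mod_cast Multigraph.spokeValue_empty_le
    rw [hF.isPrebasic.basicSize_eq]
    linarith
  refine ⟨Multigraph.ofLevels F, x, hF.isBasicSCyclePacking hloop, hcover, hx, hsize,
    fun f' hf' ↦ ?_, fun x' hx' ↦ ?_⟩
  · obtain ⟨F', hF', rfl⟩ := hf'.exists_isPrebasic
    exact (hcover.basicSize_le hloop hF').trans_eq hsize.symm
  · exact hsize.symm.trans_le (hx'.basicSize_le hloop hF.isPrebasic)
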